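/- arXiv:1102.2734 — 2 statements merged into one kernel-verified Lean document; each statement's English description precedes it below -/
import Mathlib

section
/- Let C be an (n,k) linear code over a finite field F_q with the following property: for every cubic tree T with n leaves there exists an internal node v of T such that U_{n_1}(C) + U_{n_2}(C) + U_{n_3}(C) ≤ k − τ(C), where n_i = n_{e_i(v),v} for i = 1,2,3. Then the treewidth of C equals its trelliswidth: κ(C) = τ(C). -/
open Module

/-- The submodule of vectors supported on `J` (i.e. zero outside `J`). -/
def supportedOn (F : Type) [Field F] {n : ℕ} (J : Set (Fin n)) : Submodule F (Fin n → F) :=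
  Submodule.pi Jᶜ fun _ => ⊥

/-- Dimension of the shortening `C_J` of the code `C` to the coordinates in `J`. -/
noncomputable def shortDim {F : Type} [Field F] {n : ℕ}
    (C : Submodule F (Fin n → F)) (J : Set (Fin n)) : ℕ :=
  finrank F ↥(C ⊓ supportedOn F J)

/-- Support of a subcode. -/
def chi {F : Type} [Field F] {n : ℕ} (D : Submodule F (Fin n → F)) : Set (Fin n) :=
  {i | ∃ c ∈ D, c i ≠ 0}

/-- `Ucap C s`: maximal dimension of a subcode of `C` whose support has size at most `s`. -/
noncomputable def Ucap {F : Type} [Field F] {n : ℕ}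
    (C : Submodule F (Fin n → F)) (s : ℕ) : ℕ :=
  sSup {d : ℕ | ∃ D : Submodule F (Fin n → F), D ≤ C ∧ (chi D).ncard ≤ s ∧ finrank F ↥D = d}

/-- Trelliswidth: the least branch complexity of any trellis realization of `C`,
minimized over all orderings (bijections from positions to coordinates) of `C`. -/
noncomputable def trellisWidth {F : Type} [Field F] {n : ℕ}
    (C : Submodule F (Fin n → F)) : ℕ :=
  sInf {t : ℕ | ∃ π : Equiv.Perm (Fin n),
    t = Finset.univ.sup fun i : Fin n =>
      finrank F ↥C - shortDim C (⇑π '' {j | j < i}) - shortDim C (⇑π '' {j | i < j})}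

/-- Degree of a vertex (the number of its neighbours). -/
noncomputable def deg {V : Type} (T : SimpleGraph V) (v : V) : ℕ :=
  (T.neighborSet v).ncard

/-- The set of leaves (degree-1 vertices) of a graph. -/
def leaves {V : Type} (T : SimpleGraph V) : Set V :=
  {v | deg T v = 1}

/-- A cubic tree: every node is a leaf (degree 1) or internal of degree 3. -/
def IsCubic {V : Type} (T : SimpleGraph V) : Prop :=
  ∀ v, deg T v = 1 ∨ deg T v = 3

/-- `compAway T v u` : the vertex set of the component of `T` minus the edge `{v,u}`
containing `u` (hence not containing `v`); this is `T_{e,v}` for `e = {u,v}`. -/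
def compAway {V : Type} (T : SimpleGraph V) (v u : V) : Set V :=
  {w | (T.deleteEdges {s(v, u)}).Reachable u w}

/-- `nAway T v u` : the number of leaves of `T` lying in the component of `T - {v,u}`
not containing `v`; this is `n_{e,v}` for `e = {u,v}`. -/
noncomputable def nAway {V : Type} (T : SimpleGraph V) (v u : V) : ℕ :=
  (compAway T v u ∩ leaves T).ncard

/-- Neighbours of a vertex, as a `Finset`. -/
noncomputable def nbrFinset {V : Type} [Fintype V] (T : SimpleGraph V) (v : V) : Finset V :=
  (T.neighborSet v).toFinite.toFinset

/-- `κ_v`: local constraint-code dimension at node `v` of the minimal realization of `C`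
on the tree decomposition `(T, ω)`. -/
noncomputable def kappaNode {F : Type} [Field F] {n : ℕ} (C : Submodule F (Fin n → F))
    {V : Type} [Fintype V] (T : SimpleGraph V) (ω : Fin n → V) (v : V) : ℕ :=
  finrank F ↥C - ∑ u ∈ nbrFinset T v, shortDim C (ω ⁻¹' compAway T v u)

/-- Constraint complexity `κ(C; T, ω)` of the minimal realization of `C` on `(T, ω)`. -/
noncomputable def constraintComplexity {F : Type} [Field F] {n : ℕ}
    (C : Submodule F (Fin n → F)) {V : Type} [Fintype V]
    (T : SimpleGraph V) (ω : Fin n → V) : ℕ :=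
  Finset.univ.sup (kappaNode C T ω)

/-- Treewidth of a code: the least constraint complexity of any of its tree
decompositions `(T, ω)` with `T` a finite tree. -/
noncomputable def treeWidth {F : Type} [Field F] {n : ℕ}
    (C : Submodule F (Fin n → F)) : ℕ :=
  sInf {t : ℕ | ∃ (N : ℕ) (T : SimpleGraph (Fin N)) (ω : Fin n → Fin N),
    T.IsTree ∧ t = constraintComplexity C T ω}

/-!
A trellis is a tree decomposition on a path, so `κ(C) ≤ τ(C)`. Conversely, every tree decomposition
`(T, ω)` is refined by a cubic one: root `T` at the node carrying a coordinate `i₀` and merge the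
branches and coordinates at each node two at a time, from the bottom up. The merged sets form a
laminar family, whose Hasse diagram with a root added for `i₀` is a cubic tree `T'` with `n`
leaves; for each internal node `v'` of `T'` there is a node `v` of `T` each of whose branches lies
in a branch at `v'`. At the node `v'` provided by the hypothesis, superadditivity of
`J ↦ dim C_J` gives
`∑ dim C_{branch at v} ≤ ∑ dim C_{branch at v'} ≤ U_{n₁} + U_{n₂} + U_{n₃} ≤ k - τ(C)`,
that is `κ_v ≥ τ(C)`.
-/

/-! ### Branches of a tree -/

section Branches

variable {V : Type} {T : SimpleGraph V} {a b u v w : V}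

lemma self_mem_compAway (T : SimpleGraph V) (v u : V) : u ∈ compAway T v u :=
  SimpleGraph.Reachable.refl u

lemma mem_compAway_of_adj (ha : a ∈ compAway T v u) (hab : T.Adj a b) (hne : s(a, b) ≠ s(v, u)) :
    b ∈ compAway T v u := by
  have hab' : (T.deleteEdges {s(v, u)}).Adj a b := SimpleGraph.deleteEdges_adj.2 ⟨hab, hne⟩
  exact SimpleGraph.Reachable.trans ha hab'.reachable

lemma compAway_subset {s : Set V} (hu : u ∈ s)
    (hs : ∀ a b, a ∈ s → T.Adj a b → s(a, b) ≠ s(v, u) → b ∈ s) : compAway T v u ⊆ s := by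
  intro w (hw : (T.deleteEdges {s(v, u)}).Reachable u w)
  rw [SimpleGraph.reachable_iff_reflTransGen] at hw
  induction hw with
  | refl => exact hu
  | tail _ hab ih =>
    obtain ⟨hab, hne⟩ := SimpleGraph.deleteEdges_adj.1 hab
    exact hs _ _ ih hab hne

lemma exists_mem_compAway (hT : T.Connected) (hne : w ≠ v) :
    ∃ u, T.Adj v u ∧ w ∈ compAway T v u := by
  obtain ⟨p, hp⟩ := (hT.preconnected v w).exists_isPath
  cases p with
  | nil => exact absurd rfl hne
  | @cons _ u _ hvu p =>
    have hv : v ∉ p.support := ((SimpleGraph.Walk.cons_isPath_iff hvu p).1 hp).2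
    refine ⟨u, hvu, ⟨p.toDeleteEdges _ fun e he heq => hv ?_⟩⟩
    rw [Set.mem_singleton_iff.1 heq] at he
    exact p.fst_mem_support_of_mem_edges he

lemma notMem_compAway (hT : T.IsAcyclic) (h : T.Adj v u) : v ∉ compAway T v u := by
  have hbridge := SimpleGraph.isAcyclic_iff_forall_adj_isBridge.1 hT h
  exact fun hv => SimpleGraph.isBridge_iff.1 hbridge hv.symm

lemma compAway_subset_compAway (hT : T.IsAcyclic) {u₁ u₂ : V} (h₁ : T.Adj v u₁)
    (h₂ : T.Adj v u₂) (hne : u₁ ≠ u₂) : compAway T v u₂ ⊆ compAway T u₁ v := by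
  suffices compAway T v u₂ ⊆ compAway T v u₂ ∩ compAway T u₁ v from
    this.trans Set.inter_subset_right
  refine compAway_subset ⟨self_mem_compAway _ _ _, ?_⟩ ?_
  · exact mem_compAway_of_adj (self_mem_compAway _ _ _) h₂ (by grind [h₁.ne])
  · rintro a b ⟨ha, ha'⟩ hab hab'
    have hb : b ∈ compAway T v u₂ := mem_compAway_of_adj ha hab hab'
    have hv := notMem_compAway hT h₂
    exact ⟨hb, mem_compAway_of_adj ha' hab (by grind)⟩

lemma compAway_eq_compl (hT : T.IsTree) (h : T.Adj v u) :
    compAway T u v = (compAway T v u)ᶜ := by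
  ext w
  constructor
  · intro hv hu
    have hv : (T.deleteEdges {s(v, u)}).Reachable v w := by rwa [Sym2.eq_swap]
    exact notMem_compAway hT.isAcyclic h (SimpleGraph.Reachable.trans hu hv.symm)
  · intro hw
    rcases eq_or_ne w v with rfl | hwv
    · exact self_mem_compAway _ _ _
    · obtain ⟨u', hu', hwu'⟩ := exists_mem_compAway hT.connected hwv
      have hne : u ≠ u' := by rintro rfl; exact hw hwu'
      exact compAway_subset_compAway hT.isAcyclic h hu' hne hwu'

lemma disjoint_compAway (hT : T.IsTree) {u₁ u₂ : V} (h₁ : T.Adj v u₁) (h₂ : T.Adj v u₂)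
    (hne : u₁ ≠ u₂) : Disjoint (compAway T v u₁) (compAway T v u₂) := by
  rw [← Set.subset_compl_iff_disjoint_left, ← compAway_eq_compl hT h₁]
  exact compAway_subset_compAway hT.isAcyclic h₁ h₂ hne

lemma mem_nbrFinset [Fintype V] : u ∈ nbrFinset T v ↔ T.Adj v u := by
  simp [nbrFinset]

end Branches

/-! ### Hasse diagrams of forest orders -/

lemma covBy_iff_of_lt_iff {V : Type*} [PartialOrder V] {a b x y : V}
    (h : ∀ c, c < a ↔ c ≤ x ∨ c ≤ y) (hxy : ¬x ≤ y) (hyx : ¬y ≤ x) : b ⋖ a ↔ b = x ∨ b = y := by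
  have hx : x < a := (h x).2 (Or.inl le_rfl)
  have hy : y < a := (h y).2 (Or.inr le_rfl)
  constructor
  · intro hba
    exact ((h b).1 hba.lt).imp (fun hbx => hbx.eq_of_not_lt fun hlt => hba.2 hlt hx)
      fun hby => hby.eq_of_not_lt fun hlt => hba.2 hlt hy
  · rintro (rfl | rfl)
    · refine ⟨hx, fun c hbc hca => ?_⟩
      rcases (h c).1 hca with hcb | hcy
      · exact hbc.not_ge hcb
      · exact hxy (hbc.le.trans hcy)
    · refine ⟨hy, fun c hbc hca => ?_⟩
      rcases (h c).1 hca with hcx | hcb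
      · exact hyx (hbc.le.trans hcx)
      · exact hbc.not_ge hcb

lemma connected_hasse {V : Type*} [PartialOrder V] [OrderTop V] [WellFoundedGT V]
    [IsStronglyAtomic V] : (SimpleGraph.hasse V).Connected := by
  refine SimpleGraph.connected_iff_exists_forall_reachable _ |>.2 ⟨⊤, fun a => ?_⟩
  induction a using WellFoundedGT.induction with
  | ind a ih =>
    rcases eq_or_ne a ⊤ with rfl | hne
    · exact SimpleGraph.Reachable.refl _
    · obtain ⟨b, hab, -⟩ := exists_covBy_le_of_lt hne.lt_top
      have hba : (SimpleGraph.hasse V).Adj b a := SimpleGraph.hasse_adj.2 (Or.inr hab)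
      exact (ih b hab.lt).trans hba.reachable

/-- A forest order: the elements above any given one form a chain, so that an element has at most
one upper cover, its parent. A forest order with a top element is a tree rooted at `⊤`. -/
def IsForestOrder (V : Type*) [PartialOrder V] : Prop :=
  ∀ a : V, IsChain (· ≤ ·) (Set.Ici a)

namespace IsForestOrder

lemma of_linearOrder (V : Type*) [LinearOrder V] : IsForestOrder V :=
  fun _ => isChain_of_trichotomous _

section Order

variable {V : Type*} [PartialOrder V] {a b c : V}

lemma withTop (hV : IsForestOrder V) : IsForestOrder (WithTop V) := by
  rintro a b hb c hc -
  induction c with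
  | top => exact Or.inl le_top
  | coe c =>
    induction b with
    | top => exact Or.inr le_top
    | coe b =>
      obtain ⟨a, rfl, hab⟩ := WithTop.le_coe_iff.1 (Set.mem_Ici.1 hb)
      simpa using (hV a).total hab (WithTop.coe_le_coe.1 hc)

lemma le_of_covBy_of_lt (hV : IsForestOrder V) (hab : a ⋖ b) (hac : a < c) : b ≤ c := by
  rcases (hV a).total hab.le hac.le with h | h
  · exact h
  · exact (h.eq_of_not_lt fun hcb => hab.2 hac hcb).ge

lemma eq_of_covBy (hV : IsForestOrder V) (hab : a ⋖ b) (hac : a ⋖ c) : b = c :=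
  le_antisymm (hV.le_of_covBy_of_lt hab hac.lt) (hV.le_of_covBy_of_lt hac hab.lt)

end Order

section Hasse

variable {V : Type} [PartialOrder V] {a b : V}

lemma compAway_hasse_subset_Iic (hV : IsForestOrder V) (hab : a ⋖ b) :
    compAway (SimpleGraph.hasse V) b a ⊆ Set.Iic a := by
  refine compAway_subset (Set.mem_Iic.2 le_rfl) fun c d hc hcd hne => ?_
  rw [Set.mem_Iic] at hc ⊢
  rcases SimpleGraph.hasse_adj.1 hcd with hcd | hdc
  · rcases hc.eq_or_lt with rfl | hca
    · exact absurd (by rw [hV.eq_of_covBy hcd hab, Sym2.eq_swap]) hne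
    · exact hV.le_of_covBy_of_lt hcd hca
  · exact hdc.le.trans hc

lemma isAcyclic_hasse (hV : IsForestOrder V) : (SimpleGraph.hasse V).IsAcyclic := by
  have isBridge_of_covBy {a b : V} (hab : a ⋖ b) : (SimpleGraph.hasse V).IsBridge s(a, b) := by
    rw [Sym2.eq_swap, SimpleGraph.isBridge_iff]
    exact fun h => hab.lt.not_ge (hV.compAway_hasse_subset_Iic hab h.symm)
  rw [SimpleGraph.isAcyclic_iff_forall_adj_isBridge]
  intro a b hab
  rcases SimpleGraph.hasse_adj.1 hab with hab | hba
  · exact isBridge_of_covBy hab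
  · rw [Sym2.eq_swap]
    exact isBridge_of_covBy hba

lemma deg_hasse (hV : IsForestOrder V) [Finite V] (hab : a ⋖ b) :
    deg (SimpleGraph.hasse V) a = {c | c ⋖ a}.ncard + 1 := by
  have hnbr : (SimpleGraph.hasse V).neighborSet a = insert b {c | c ⋖ a} := by
    ext c
    have hparent : a ⋖ c ↔ c = b := ⟨fun hac => hV.eq_of_covBy hac hab, fun h => h ▸ hab⟩
    simp [SimpleGraph.hasse_adj, hparent]
  rw [deg, hnbr, Set.ncard_insert_of_notMem fun hba => hab.lt.not_gt hba.lt]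

variable [WellFoundedGT V] [IsStronglyAtomic V]

lemma compAway_hasse_eq_Iic (hV : IsForestOrder V) (hab : a ⋖ b) :
    compAway (SimpleGraph.hasse V) b a = Set.Iic a := by
  refine (hV.compAway_hasse_subset_Iic hab).antisymm fun c => ?_
  induction c using WellFoundedGT.induction with
  | ind c ih =>
    intro hca
    rcases (Set.mem_Iic.1 hca).eq_or_lt with rfl | hlt
    · exact self_mem_compAway _ _ _
    · obtain ⟨d, hcd, hda⟩ := exists_covBy_le_of_lt hlt
      refine mem_compAway_of_adj (ih d hcd.lt hda) (SimpleGraph.hasse_adj.2 (Or.inr hcd)) ?_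
      have hdb : d ≠ b := (hda.trans_lt hab.lt).ne
      have hcb : c ≠ b := (hlt.trans hab.lt).ne
      grind

variable [OrderTop V]

lemma isTree_hasse (hV : IsForestOrder V) : (SimpleGraph.hasse V).IsTree :=
  ⟨connected_hasse, hV.isAcyclic_hasse⟩

lemma compAway_hasse_eq_compl_Iic (hV : IsForestOrder V) (hab : a ⋖ b) :
    compAway (SimpleGraph.hasse V) a b = (Set.Iic a)ᶜ := by
  rw [compAway_eq_compl hV.isTree_hasse (SimpleGraph.hasse_adj.2 (Or.inr hab)),
    hV.compAway_hasse_eq_Iic hab]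

end Hasse

end IsForestOrder

section LinearOrder

variable {V : Type} [LinearOrder V] [WellFoundedGT V] [IsStronglyAtomic V] {i : V}

lemma exists_compAway_hasse_eq_Iio [IsStronglyCoatomic V] (hi : (Set.Iio i).Nonempty) :
    ∃ u, (SimpleGraph.hasse V).Adj i u ∧ compAway (SimpleGraph.hasse V) i u = Set.Iio i := by
  obtain ⟨_, hj⟩ := hi
  obtain ⟨u, -, hu⟩ := exists_le_covBy_of_lt (Set.mem_Iio.1 hj)
  refine ⟨u, SimpleGraph.hasse_adj.2 (Or.inr hu), ?_⟩
  rw [(IsForestOrder.of_linearOrder V).compAway_hasse_eq_Iic hu, hu.Iio_eq]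

lemma exists_compAway_hasse_eq_Ioi [OrderTop V] (hi : (Set.Ioi i).Nonempty) :
    ∃ u, (SimpleGraph.hasse V).Adj i u ∧ compAway (SimpleGraph.hasse V) i u = Set.Ioi i := by
  obtain ⟨_, hj⟩ := hi
  obtain ⟨u, hu, -⟩ := exists_covBy_le_of_lt (Set.mem_Ioi.1 hj)
  refine ⟨u, SimpleGraph.hasse_adj.2 (Or.inl hu), ?_⟩
  rw [(IsForestOrder.of_linearOrder V).compAway_hasse_eq_compl_Iic hu, Set.compl_Iic]

end LinearOrder

/-! ### Shortenings of a code -/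

section Shortening

variable {F : Type} [Field F] {n : ℕ} {C : Submodule F (Fin n → F)} {A B : Set (Fin n)} {s : ℕ}

lemma supportedOn_mono (h : A ⊆ B) : supportedOn F A ≤ supportedOn F B :=
  fun _ hc i hi => hc i fun hA => hi (h hA)

lemma disjoint_supportedOn (h : Disjoint A B) :
    Disjoint (supportedOn F A) (supportedOn F B) := by
  rw [Submodule.disjoint_def]
  intro c hA hB
  ext i
  by_cases hi : i ∈ A
  · exact hB i (Set.disjoint_left.1 h hi)
  · exact hA i hi

lemma supportedOn_empty : supportedOn F (∅ : Set (Fin n)) = ⊥ := by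
  simp [supportedOn]

variable (C) in
lemma shortDim_empty : shortDim C ∅ = 0 := by
  rw [shortDim, supportedOn_empty, inf_bot_eq, finrank_bot]

variable (C) in
lemma shortDim_add_le_shortDim_union (h : Disjoint A B) :
    shortDim C A + shortDim C B ≤ shortDim C (A ∪ B) := by
  have hinf : (C ⊓ supportedOn F A) ⊓ (C ⊓ supportedOn F B) = ⊥ :=
    ((disjoint_supportedOn h).mono inf_le_right inf_le_right).eq_bot
  have hsup : (C ⊓ supportedOn F A) ⊔ (C ⊓ supportedOn F B) ≤ C ⊓ supportedOn F (A ∪ B) :=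
    sup_le (inf_le_inf_left _ (supportedOn_mono Set.subset_union_left))
      (inf_le_inf_left _ (supportedOn_mono Set.subset_union_right))
  calc shortDim C A + shortDim C B
      = finrank F ↥((C ⊓ supportedOn F A) ⊔ (C ⊓ supportedOn F B)) := by
        rw [shortDim, shortDim, ← Submodule.finrank_sup_add_finrank_inf_eq, hinf, finrank_bot,
          add_zero]
    _ ≤ shortDim C (A ∪ B) := Submodule.finrank_mono hsup

variable (C) in
lemma sum_shortDim_le_shortDim {ι : Type*} {s : Finset ι} {B : ι → Set (Fin n)}
    (hd : (s : Set ι).PairwiseDisjoint B) (hA : ∀ i ∈ s, B i ⊆ A) :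
    ∑ i ∈ s, shortDim C (B i) ≤ shortDim C A := by
  classical
  induction s using Finset.induction_on generalizing A with
  | empty => simp
  | insert i s hi ih =>
    have hsub : ∀ j ∈ s, B j ⊆ A \ B i := fun j hj =>
      Set.subset_sdiff.2 ⟨hA j (Finset.mem_insert_of_mem hj),
        hd (by simp [hj]) (by simp) (by rintro rfl; exact hi hj)⟩
    calc ∑ j ∈ insert i s, shortDim C (B j)
        = shortDim C (B i) + ∑ j ∈ s, shortDim C (B j) := Finset.sum_insert hi
      _ ≤ shortDim C (B i) + shortDim C (A \ B i) :=
        Nat.add_le_add_left (ih (hd.subset (by simp)) hsub) _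
      _ ≤ shortDim C (B i ∪ A \ B i) := shortDim_add_le_shortDim_union C Set.disjoint_sdiff_right
      _ = shortDim C A := by rw [Set.union_sdiff_cancel (hA i (Finset.mem_insert_self i s))]

variable (C) in
lemma sum_shortDim_le_sum_shortDim {ι κ : Type*} {s : Finset ι} {t : Finset κ}
    {B : ι → Set (Fin n)} {A : κ → Set (Fin n)} (hd : (s : Set ι).PairwiseDisjoint B)
    (hBA : ∀ i ∈ s, (B i).Nonempty → ∃ j ∈ t, B i ⊆ A j) :
    ∑ i ∈ s, shortDim C (B i) ≤ ∑ j ∈ t, shortDim C (A j) := by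
  classical
  calc ∑ i ∈ s, shortDim C (B i)
      ≤ ∑ i ∈ s, ∑ j ∈ t, if B i ⊆ A j then shortDim C (B i) else 0 := by
        refine Finset.sum_le_sum fun i hi => ?_
        rcases (B i).eq_empty_or_nonempty with hB | hB
        · simp [hB, shortDim_empty]
        · obtain ⟨j, hj, hij⟩ := hBA i hi hB
          have hle := Finset.single_le_sum (s := t)
            (f := fun j => if B i ⊆ A j then shortDim C (B i) else 0) (fun _ _ => Nat.zero_le _) hj
          rwa [if_pos hij] at hle
    _ = ∑ j ∈ t, ∑ i ∈ s with B i ⊆ A j, shortDim C (B i) := by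
        rw [Finset.sum_comm]
        simp only [Finset.sum_filter]
    _ ≤ ∑ j ∈ t, shortDim C (A j) := by
        refine Finset.sum_le_sum fun j _ => sum_shortDim_le_shortDim C
          (hd.subset (Finset.coe_subset.2 (Finset.filter_subset _ s))) fun i hi => ?_
        exact (Finset.mem_filter.1 hi).2

lemma finrank_le_Ucap {D : Submodule F (Fin n → F)} (hD : D ≤ C) (hs : (chi D).ncard ≤ s) :
    finrank F ↥D ≤ Ucap C s := by
  refine le_csSup ⟨finrank F C, ?_⟩ ⟨D, hD, hs, rfl⟩
  rintro _ ⟨D, hD, -, rfl⟩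
  exact Submodule.finrank_mono hD

variable (C) in
lemma shortDim_le_Ucap (h : A.ncard ≤ s) : shortDim C A ≤ Ucap C s := by
  have hchi : chi (C ⊓ supportedOn F A) ⊆ A := by
    rintro i ⟨c, ⟨-, hc⟩, hi⟩
    by_contra hiA
    exact hi (hc i hiA)
  exact finrank_le_Ucap inf_le_left ((Set.ncard_le_ncard hchi).trans h)

end Shortening

/-! ### Treewidth is at most trelliswidth -/

/-- The branch complexity of the minimal trellis realization of `C` with coordinate ordering `π`,
the quantity minimized by `trellisWidth`. -/
noncomputable def branchComplexity {F : Type} [Field F] {n : ℕ} (C : Submodule F (Fin n → F))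
    (π : Equiv.Perm (Fin n)) : ℕ :=
  Finset.univ.sup fun i : Fin n =>
    finrank F ↥C - shortDim C (⇑π '' {j | j < i}) - shortDim C (⇑π '' {j | i < j})

section Widths

variable {F : Type} [Field F] {n : ℕ} (C : Submodule F (Fin n → F))

lemma exists_trellisWidth_eq : ∃ π, trellisWidth C = branchComplexity C π :=
  Nat.sInf_mem (s := {t | ∃ π, t = branchComplexity C π}) ⟨_, 1, rfl⟩

lemma trellisWidth_le_finrank : trellisWidth C ≤ finrank F ↥C := by
  obtain ⟨π, hπ⟩ := exists_trellisWidth_eq C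
  rw [hπ]
  exact Finset.sup_le fun i _ => (Nat.sub_le _ _).trans (Nat.sub_le _ _)

lemma treeWidth_le_constraintComplexity {N : ℕ} {T : SimpleGraph (Fin N)} (hT : T.IsTree)
    (ω : Fin n → Fin N) : treeWidth C ≤ constraintComplexity C T ω :=
  Nat.sInf_le ⟨N, T, ω, hT, rfl⟩

variable {C} in
lemma le_treeWidth {t : ℕ}
    (h : ∀ (N : ℕ) (T : SimpleGraph (Fin N)) (ω : Fin n → Fin N), T.IsTree →
      t ≤ constraintComplexity C T ω) : t ≤ treeWidth C := by
  have hpath := (IsForestOrder.of_linearOrder (Fin 1)).isTree_hasse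
  refine le_csInf ⟨_, 1, SimpleGraph.hasse (Fin 1), fun _ => 0, hpath, rfl⟩ ?_
  rintro _ ⟨N, T, ω, hT, rfl⟩
  exact h N T ω hT

lemma constraintComplexity_le_finrank {V : Type} [Fintype V] (T : SimpleGraph V) (ω : Fin n → V) :
    constraintComplexity C T ω ≤ finrank F ↥C :=
  Finset.sup_le fun _ _ => Nat.sub_le _ _

variable {C} in
lemma kappaNode_hasse_le (π : Equiv.Perm (Fin n)) (i : Fin n) :
    kappaNode C (SimpleGraph.hasse (Fin n)) ⇑π.symm i ≤
      finrank F ↥C - shortDim C (⇑π '' {j | j < i}) - shortDim C (⇑π '' {j | i < j}) := by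
  have : NeZero n := ⟨i.pos.ne'⟩
  let sides : Fin 2 → Set (Fin n) := ![⇑π '' Set.Iio i, ⇑π '' Set.Ioi i]
  have hd : ((Finset.univ : Finset (Fin 2)) : Set (Fin 2)).PairwiseDisjoint sides := by
    have hlr : Disjoint (⇑π '' Set.Iio i) (⇑π '' Set.Ioi i) :=
      (Set.disjoint_image_iff π.injective).2 Set.Iio_disjoint_Ioi_same
    intro a _ b _ hab
    fin_cases a <;> fin_cases b <;> simp_all [sides, Function.onFun, hlr.symm]
  have hle := sum_shortDim_le_sum_shortDim C (t := nbrFinset (SimpleGraph.hasse (Fin n)) i)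
    (A := fun u => ⇑π.symm ⁻¹' compAway (SimpleGraph.hasse (Fin n)) i u) hd ?_
  · rw [Fin.sum_univ_two] at hle
    rw [kappaNode, Nat.sub_sub]
    exact Nat.sub_le_sub_left hle _
  · simp only [Finset.mem_univ, true_imp_iff, Fin.forall_fin_two, sides, Matrix.cons_val_zero,
      Matrix.cons_val_one, Equiv.image_eq_preimage_symm]
    constructor
    · rintro ⟨j, hj⟩
      obtain ⟨u, hu, h⟩ := exists_compAway_hasse_eq_Iio ⟨_, Set.mem_preimage.1 hj⟩
      exact ⟨u, mem_nbrFinset.2 hu, (congrArg _ h).ge⟩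
    · rintro ⟨j, hj⟩
      obtain ⟨u, hu, h⟩ := exists_compAway_hasse_eq_Ioi ⟨_, Set.mem_preimage.1 hj⟩
      exact ⟨u, mem_nbrFinset.2 hu, (congrArg _ h).ge⟩

theorem treeWidth_le_trellisWidth : treeWidth C ≤ trellisWidth C := by
  rcases n with _ | n
  · have hpath := (IsForestOrder.of_linearOrder (Fin 1)).isTree_hasse
    calc treeWidth C ≤ constraintComplexity C _ Fin.elim0 :=
          treeWidth_le_constraintComplexity C hpath _
      _ ≤ finrank F ↥C := constraintComplexity_le_finrank C _ _
      _ = 0 := Module.finrank_zero_of_subsingleton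
      _ ≤ trellisWidth C := Nat.zero_le _
  · have hpath := (IsForestOrder.of_linearOrder (Fin (n + 1))).isTree_hasse
    obtain ⟨π, hπ⟩ := exists_trellisWidth_eq C
    rw [hπ]
    calc treeWidth C ≤ constraintComplexity C _ ⇑π.symm :=
          treeWidth_le_constraintComplexity C hpath _
      _ ≤ branchComplexity C π := Finset.sup_mono_fun fun i _ => kappaNode_hasse_le π i

end Widths

/-! ### Binary hierarchies -/

/-- `BinaryHierarchy P S H` says that the sets in `H` arise from the singletons of `S` by merging
disjoint sets two at a time until only `S` is left, where `P` holds for any two sets merged. -/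
inductive BinaryHierarchy {I : Type*} (P : Set I → Set I → Prop) : Set I → Set (Set I) → Prop
  | single (i : I) : BinaryHierarchy P {i} {{i}}
  | join {S₁ S₂ : Set I} {H₁ H₂ : Set (Set I)} (h₁ : BinaryHierarchy P S₁ H₁)
      (h₂ : BinaryHierarchy P S₂ H₂) (hd : Disjoint S₁ S₂) (hP : P S₁ S₂) :
      BinaryHierarchy P (S₁ ∪ S₂) (insert (S₁ ∪ S₂) (H₁ ∪ H₂))

namespace BinaryHierarchy

section Sets

variable {I : Type*} {P : Set I → Set I → Prop} {S A B : Set I} {H : Set (Set I)} {i : I}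

lemma self_mem (h : BinaryHierarchy P S H) : S ∈ H := by
  cases h with
  | single i => rfl
  | join => exact Set.mem_insert _ _

lemma subset (h : BinaryHierarchy P S H) (hA : A ∈ H) : A ⊆ S := by
  induction h with
  | single i => exact hA.subset
  | join _ _ _ _ ih₁ ih₂ =>
    rcases hA with rfl | hA | hA
    · exact subset_rfl
    · exact (ih₁ hA).trans Set.subset_union_left
    · exact (ih₂ hA).trans Set.subset_union_right

lemma nonempty (h : BinaryHierarchy P S H) (hA : A ∈ H) : A.Nonempty := by
  induction h generalizing A with
  | single i => exact hA ▸ Set.singleton_nonempty i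
  | join h₁ _ _ _ ih₁ ih₂ =>
    rcases hA with rfl | hA | hA
    · exact (ih₁ h₁.self_mem).inl
    · exact ih₁ hA
    · exact ih₂ hA

lemma singleton_mem (h : BinaryHierarchy P S H) (hi : i ∈ S) : {i} ∈ H := by
  induction h with
  | single j => exact congrArg _ hi
  | join _ _ _ _ ih₁ ih₂ => exact Or.inr (hi.imp ih₁ ih₂)

lemma laminar (h : BinaryHierarchy P S H) (hA : A ∈ H) (hB : B ∈ H) :
    A ⊆ B ∨ B ⊆ A ∨ Disjoint A B := by
  induction h with
  | single i => exact Or.inl (hA.trans hB.symm).subset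
  | join h₁ h₂ hd hP ih₁ ih₂ =>
    rcases hA with rfl | hA'
    · exact Or.inr (Or.inl ((h₁.join h₂ hd hP).subset hB))
    · rcases hB with rfl | hB'
      · exact Or.inl ((h₁.join h₂ hd hP).subset (Or.inr hA'))
      · rcases hA' with hA | hA <;> rcases hB' with hB | hB
        · exact ih₁ hA hB
        · exact Or.inr (Or.inr (hd.mono (h₁.subset hA) (h₂.subset hB)))
        · exact Or.inr (Or.inr (hd.symm.mono (h₂.subset hA) (h₁.subset hB)))
        · exact ih₂ hA hB

lemma eq_singleton_or_eq_union (h : BinaryHierarchy P S H) (hA : A ∈ H) :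
    (∃ i, A = {i}) ∨ ∃ A₁ ∈ H, ∃ A₂ ∈ H, Disjoint A₁ A₂ ∧ P A₁ A₂ ∧ A = A₁ ∪ A₂ := by
  induction h with
  | single i => exact Or.inl ⟨i, hA⟩
  | @join S₁ S₂ H₁ H₂ h₁ h₂ hd hP ih₁ ih₂ =>
    have hH₁ : H₁ ⊆ insert (S₁ ∪ S₂) (H₁ ∪ H₂) := fun _ hB => Or.inr (Or.inl hB)
    have hH₂ : H₂ ⊆ insert (S₁ ∪ S₂) (H₁ ∪ H₂) := fun _ hB => Or.inr (Or.inr hB)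
    rcases hA with rfl | hA | hA
    · exact Or.inr ⟨S₁, hH₁ h₁.self_mem, S₂, hH₂ h₂.self_mem, hd, hP, rfl⟩
    · exact (ih₁ hA).imp_right fun ⟨A₁, hA₁, A₂, hA₂, h⟩ => ⟨A₁, hH₁ hA₁, A₂, hH₁ hA₂, h⟩
    · exact (ih₂ hA).imp_right fun ⟨A₁, hA₁, A₂, hA₂, h⟩ => ⟨A₁, hH₂ hA₁, A₂, hH₂ hA₂, h⟩

end Sets

section Order

variable {I : Type*} {P : Set I → Set I → Prop} {S : Set I} {H : Set (Set I)}

lemma isForestOrder (h : BinaryHierarchy P S H) : IsForestOrder H := by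
  rintro A B (hAB : A.1 ⊆ B) C (hAC : A.1 ⊆ C) -
  rcases h.laminar B.2 C.2 with hBC | hCB | hd
  · exact Or.inl hBC
  · exact Or.inr hCB
  · obtain ⟨i, hi⟩ := h.nonempty A.2
    exact absurd (hAC hi) (Set.disjoint_left.1 hd (hAB hi))

lemma not_covBy_singleton (h : BinaryHierarchy P S H) {A B : H} {i : I} (hA : A.1 = {i}) :
    ¬B ⋖ A := by
  intro hBA
  have hsub : B.1 ⊆ {i} := hA ▸ hBA.le
  exact hBA.lt.ne (Subtype.ext (((h.nonempty B.2).subset_singleton_iff.1 hsub).trans hA.symm))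

lemma not_le_of_disjoint (h : BinaryHierarchy P S H) {A B : H} (hd : Disjoint A.1 B.1) :
    ¬A ≤ B :=
  fun hAB => (h.nonempty A.2).ne_empty (hd.eq_bot_of_le hAB)

lemma lt_iff_of_eq_union (h : BinaryHierarchy P S H) {A A₁ A₂ B : H}
    (hd : Disjoint A₁.1 A₂.1) (hA : A.1 = A₁.1 ∪ A₂.1) : B < A ↔ B ≤ A₁ ∨ B ≤ A₂ := by
  have hA₁ : A₁ < A := Subtype.coe_lt_coe.1 (hA ▸ left_lt_sup.2 (h.not_le_of_disjoint hd.symm))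
  have hA₂ : A₂ < A := Subtype.coe_lt_coe.1 (hA ▸ right_lt_sup.2 (h.not_le_of_disjoint hd))
  refine ⟨fun hBA => ?_, fun hB => hB.elim (·.trans_lt hA₁) (·.trans_lt hA₂)⟩
  have hsub : B.1 ⊆ A₁.1 ∪ A₂.1 := hA ▸ hBA.le
  rcases h.laminar B.2 A₁.2 with h₁ | h₁ | h₁
  · exact Or.inl h₁
  · rcases h.laminar B.2 A₂.2 with h₂ | h₂ | h₂
    · exact Or.inr h₂
    · have hAB : A.1 ⊆ B := hA ▸ Set.union_subset h₁ h₂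
      exact absurd hAB hBA.not_ge
    · exact Or.inl (h₂.subset_left_of_subset_union hsub)
  · exact Or.inr (h₁.subset_right_of_subset_union hsub)

lemma covBy_iff_of_eq_union (h : BinaryHierarchy P S H) {A A₁ A₂ B : H}
    (hd : Disjoint A₁.1 A₂.1) (hA : A.1 = A₁.1 ∪ A₂.1) : B ⋖ A ↔ B = A₁ ∨ B = A₂ :=
  covBy_iff_of_lt_iff (fun _ => h.lt_iff_of_eq_union hd hA) (h.not_le_of_disjoint hd)
    (h.not_le_of_disjoint hd.symm)

end Order

section Leaf

variable {I : Type} {P : Set I → Set I → Prop} {i₀ i : I} {H : Set (Set I)}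

open Classical in
/-- The vertex of the Hasse diagram of `WithTop H` that represents the coordinate `i`: the added
root for the coordinate `i₀` missing from the hierarchy, and the singleton of `i` otherwise. -/
noncomputable def leaf (h : BinaryHierarchy P {i₀}ᶜ H) (i : I) : WithTop H :=
  if hi : i = i₀ then ⊤ else ((⟨{i}, h.singleton_mem hi⟩ : H) : WithTop H)

lemma leaf_self (h : BinaryHierarchy P {i₀}ᶜ H) : h.leaf i₀ = ⊤ :=
  dif_pos rfl

lemma leaf_of_ne (h : BinaryHierarchy P {i₀}ᶜ H) (hi : i ≠ i₀) :
    h.leaf i = ((⟨{i}, h.singleton_mem hi⟩ : H) : WithTop H) :=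
  dif_neg hi

lemma leaf_le_coe (h : BinaryHierarchy P {i₀}ᶜ H) {A : H} : h.leaf i ≤ A ↔ i ∈ A.1 := by
  rcases eq_or_ne i i₀ with rfl | hi
  · have hiA : i ∉ A.1 := fun hiA => h.subset A.2 hiA rfl
    simp [leaf_self, hiA]
  · rw [h.leaf_of_ne hi, WithTop.coe_le_coe, ← Subtype.coe_le_coe]
    exact Set.singleton_subset_iff

lemma leaf_injective (h : BinaryHierarchy P {i₀}ᶜ H) : Function.Injective h.leaf := by
  intro i j hij
  by_contra hne
  wlog hj : j ≠ i₀ generalizing i j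
  · exact this hij.symm (Ne.symm hne) (not_ne_iff.1 hj ▸ hne)
  have hle : h.leaf i ≤ h.leaf j := hij.le
  rw [h.leaf_of_ne hj, leaf_le_coe] at hle
  exact hne hle

lemma eq_leaf_of_eq_singleton (h : BinaryHierarchy P {i₀}ᶜ H) {A : H} (hA : A.1 = {i}) :
    (A : WithTop H) = h.leaf i := by
  have hi : i ≠ i₀ := h.subset A.2 (hA ▸ Set.mem_singleton i)
  rw [h.leaf_of_ne hi, WithTop.coe_inj]
  exact Subtype.ext hA

lemma eq_leaf_or_eq_union (h : BinaryHierarchy P {i₀}ᶜ H) (v : WithTop H) :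
    (∃ i, v = h.leaf i) ∨ ∃ A A₁ A₂ : H,
      v = A ∧ Disjoint A₁.1 A₂.1 ∧ P A₁ A₂ ∧ A.1 = A₁.1 ∪ A₂.1 := by
  induction v with
  | top => exact Or.inl ⟨i₀, h.leaf_self.symm⟩
  | coe A =>
    refine (h.eq_singleton_or_eq_union A.2).imp
      (fun ⟨i, hA⟩ => ⟨i, h.eq_leaf_of_eq_singleton hA⟩) ?_
    rintro ⟨A₁, hA₁, A₂, hA₂, hd, hP, hA⟩
    exact ⟨A, ⟨A₁, hA₁⟩, ⟨A₂, hA₂⟩, rfl, hd, hP, hA⟩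

end Leaf

section Hasse

variable {I : Type} {P : Set I → Set I → Prop} {S : Set I} {i₀ i : I} {H : Set (Set I)}
  {A A₁ A₂ : H}

lemma deg_hasse_top (h : BinaryHierarchy P S H) :
    deg (SimpleGraph.hasse (WithTop H)) ⊤ = 1 := by
  have hmax {A : H} : IsMax A ↔ A = ⟨S, h.self_mem⟩ :=
    ⟨fun hA => hA.eq_of_le (h.subset A.2), fun hA _ _ => hA ▸ h.subset (Subtype.mem _)⟩
  refine Set.ncard_eq_one.2 ⟨((⟨S, h.self_mem⟩ : H) : WithTop H), ?_⟩
  ext v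
  induction v with
  | top => simp
  | coe A =>
    have hA : ¬(⊤ : WithTop H) ⋖ A := fun hA => not_top_lt hA.lt
    rw [SimpleGraph.mem_neighborSet, SimpleGraph.hasse_adj, WithTop.coe_covBy_top, hmax,
      or_iff_right hA, Set.mem_singleton_iff, WithTop.coe_inj]

variable [Finite I]

lemma deg_hasse_coe (h : BinaryHierarchy P S H) :
    deg (SimpleGraph.hasse (WithTop H)) A = {B | B ⋖ A}.ncard + 1 := by
  obtain ⟨b, hAb, -⟩ := exists_covBy_le_of_lt (WithTop.coe_lt_top A)
  have hcov : {v : WithTop H | v ⋖ A} = WithTop.some '' {B | B ⋖ A} := by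
    ext v
    induction v with
    | top => simp [CovBy]
    | coe B => simp [WithTop.coe_covBy_coe]
  rw [h.isForestOrder.withTop.deg_hasse hAb, hcov,
    Set.ncard_image_of_injective _ WithTop.coe_injective]

lemma deg_hasse_leaf (h : BinaryHierarchy P {i₀}ᶜ H) :
    deg (SimpleGraph.hasse (WithTop H)) (h.leaf i) = 1 := by
  rcases eq_or_ne i i₀ with rfl | hi
  · rw [leaf_self, h.deg_hasse_top]
  · have hmin : {B : H | B ⋖ ⟨{i}, h.singleton_mem hi⟩} = ∅ :=
      Set.eq_empty_of_forall_notMem fun B => h.not_covBy_singleton rfl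
    rw [h.leaf_of_ne hi, h.deg_hasse_coe, hmin, Set.ncard_empty]

lemma deg_hasse_of_eq_union (h : BinaryHierarchy P S H) (hd : Disjoint A₁.1 A₂.1)
    (hA : A.1 = A₁.1 ∪ A₂.1) : deg (SimpleGraph.hasse (WithTop H)) A = 3 := by
  have hcov : {B | B ⋖ A} = {A₁, A₂} := Set.ext fun _ => h.covBy_iff_of_eq_union hd hA
  rw [h.deg_hasse_coe, hcov, Set.ncard_pair fun hne => h.not_le_of_disjoint hd hne.le]

lemma leaf_preimage_compAway_of_covBy (h : BinaryHierarchy P {i₀}ᶜ H) {B : H} (hBA : B ⋖ A) :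
    h.leaf ⁻¹' compAway (SimpleGraph.hasse (WithTop H)) A B = B := by
  rw [h.isForestOrder.withTop.compAway_hasse_eq_Iic (WithTop.coe_covBy_coe.2 hBA)]
  exact Set.ext fun i => h.leaf_le_coe

lemma exists_leaf_preimage_compAway_eq_compl (h : BinaryHierarchy P {i₀}ᶜ H) (A : H) :
    ∃ u, (SimpleGraph.hasse (WithTop H)).Adj A u ∧
      h.leaf ⁻¹' compAway (SimpleGraph.hasse (WithTop H)) A u = (A.1)ᶜ := by
  obtain ⟨u, hAu, -⟩ := exists_covBy_le_of_lt (WithTop.coe_lt_top A)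
  refine ⟨u, SimpleGraph.hasse_adj.2 (Or.inl hAu), ?_⟩
  rw [h.isForestOrder.withTop.compAway_hasse_eq_compl_Iic hAu]
  exact Set.ext fun i => not_congr h.leaf_le_coe

lemma isCubic_hasse (h : BinaryHierarchy P {i₀}ᶜ H) :
    IsCubic (SimpleGraph.hasse (WithTop H)) := by
  intro v
  rcases h.eq_leaf_or_eq_union v with ⟨i, rfl⟩ | ⟨A, A₁, A₂, rfl, hd, -, hA⟩
  · exact Or.inl h.deg_hasse_leaf
  · exact Or.inr (h.deg_hasse_of_eq_union hd hA)

lemma range_leaf (h : BinaryHierarchy P {i₀}ᶜ H) :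
    Set.range h.leaf = leaves (SimpleGraph.hasse (WithTop H)) := by
  have hsub : Set.range h.leaf ⊆ leaves (SimpleGraph.hasse (WithTop H)) := by
    rintro _ ⟨i, rfl⟩
    exact h.deg_hasse_leaf
  refine hsub.antisymm fun v (hv : deg (SimpleGraph.hasse (WithTop H)) v = 1) => ?_
  rcases h.eq_leaf_or_eq_union v with ⟨i, rfl⟩ | ⟨A, A₁, A₂, rfl, hd, -, hA⟩
  · exact Set.mem_range_self i
  · rw [h.deg_hasse_of_eq_union hd hA] at hv
    omega

end Hasse

end BinaryHierarchy

/-! ### Cubic refinements of tree decompositions -/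

/-- A set is hierarchical if it is empty or has a binary hierarchy with all merges satisfying
`P`. -/
def Hierarchical {I : Type*} (P : Set I → Set I → Prop) (S : Set I) : Prop :=
  S.Nonempty → ∃ H, BinaryHierarchy P S H

section Hierarchical

variable {I : Type*} {P : Set I → Set I → Prop} {S₁ S₂ : Set I}

lemma Hierarchical.singleton (i : I) : Hierarchical P {i} :=
  fun _ => ⟨_, .single i⟩

lemma Hierarchical.union (h₁ : Hierarchical P S₁) (h₂ : Hierarchical P S₂) (hd : Disjoint S₁ S₂)
    (hP : P S₁ S₂) : Hierarchical P (S₁ ∪ S₂) := by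
  rcases S₁.eq_empty_or_nonempty with rfl | hS₁
  · rwa [Set.empty_union]
  rcases S₂.eq_empty_or_nonempty with rfl | hS₂
  · rwa [Set.union_empty]
  obtain ⟨H₁, hH₁⟩ := h₁ hS₁
  obtain ⟨H₂, hH₂⟩ := h₂ hS₂
  exact fun _ => ⟨_, hH₁.join hH₂ hd hP⟩

lemma hierarchical_sUnion {𝒜 : Set (Set I)} (hfin : 𝒜.Finite) (hd : 𝒜.PairwiseDisjoint id)
    (h : ∀ A ∈ 𝒜, Hierarchical P A)
    (hP : ∀ A ∈ 𝒜, ∀ ℬ ⊆ 𝒜, P A (⋃₀ ℬ)) : Hierarchical P (⋃₀ 𝒜) := by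
  refine Set.Finite.induction_on_subset (motive := fun ℬ _ => Hierarchical P (⋃₀ ℬ)) 𝒜 hfin
    (by simp [Hierarchical]) fun {A ℬ} hA hℬ hAℬ ih => ?_
  rw [Set.sUnion_insert]
  refine (h A hA).union ih ?_ (hP A hA ℬ hℬ)
  exact Set.disjoint_sUnion_right.2 fun B hB => hd hA (hℬ hB) fun hAB => hAℬ (hAB ▸ hB)

end Hierarchical

section Refinement

variable {I : Type*} {V : Type} {T : SimpleGraph V} {ω : I → V} {u v : V} {B : Set I}
  {ℬ : Set (Set I)}

/-- The partition of the coordinates at the node `v` of a tree decomposition: the coordinates in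
each branch at `v`, and each coordinate at `v` by itself. -/
def blocks (T : SimpleGraph V) (ω : I → V) (v : V) : Set (Set I) :=
  (fun u => ω ⁻¹' compAway T v u) '' T.neighborSet v ∪ singleton '' (ω ⁻¹' {v})

/-- Some node `v` of the tree decomposition has each of its branches contained in one of the sets
`S₁`, `S₂` and `(S₁ ∪ S₂)ᶜ`, which are the branches at the node where `S₁` and `S₂` are merged. -/
def IsNodeSplit (T : SimpleGraph V) (ω : I → V) (S₁ S₂ : Set I) : Prop :=
  ∃ v, ∀ u, T.Adj v u → ω ⁻¹' compAway T v u ⊆ S₁ ∨ ω ⁻¹' compAway T v u ⊆ S₂ ∨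
    ω ⁻¹' compAway T v u ⊆ (S₁ ∪ S₂)ᶜ

lemma preimage_compAway_mem_blocks (huv : T.Adj v u) : ω ⁻¹' compAway T v u ∈ blocks T ω v :=
  Or.inl ⟨u, huv, rfl⟩

lemma singleton_mem_blocks {i : I} : {i} ∈ blocks T ω (ω i) :=
  Or.inr ⟨i, rfl, rfl⟩

lemma pairwiseDisjoint_blocks (hT : T.IsTree) : (blocks T ω v).PairwiseDisjoint id := by
  have hbranch {u i} (hu : T.Adj v u) (hi : ω i = v) : i ∉ ω ⁻¹' compAway T v u :=
    fun h => notMem_compAway hT.isAcyclic hu (hi ▸ h)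
  rintro _ (⟨u₁, h₁, rfl⟩ | ⟨i, hi, rfl⟩) _ (⟨u₂, h₂, rfl⟩ | ⟨j, hj, rfl⟩) hne
  · exact (disjoint_compAway hT h₁ h₂ fun h => hne (h ▸ rfl)).preimage ω
  · exact Set.disjoint_singleton_right.2 (hbranch h₁ hj)
  · exact Set.disjoint_singleton_left.2 (hbranch h₂ hi)
  · exact Set.disjoint_singleton.2 fun h => hne (h ▸ rfl)

lemma sUnion_blocks (hT : T.Connected) : ⋃₀ blocks T ω v = Set.univ := by
  refine Set.eq_univ_of_forall fun i => ?_
  rcases eq_or_ne (ω i) v with rfl | hne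
  · exact ⟨_, singleton_mem_blocks, rfl⟩
  · obtain ⟨u, hu, hi⟩ := exists_mem_compAway hT hne
    exact ⟨_, preimage_compAway_mem_blocks hu, hi⟩

lemma sUnion_blocks_sdiff_singleton (hT : T.IsTree) (hB : B ∈ blocks T ω v) :
    ⋃₀ (blocks T ω v \ {B}) = Bᶜ := by
  have hdisj : Disjoint (⋃₀ (blocks T ω v \ {B})) B :=
    Set.disjoint_sUnion_left.2 fun A hA => pairwiseDisjoint_blocks hT hA.1 hB hA.2
  refine hdisj.subset_compl_right.antisymm fun i hi => ?_
  obtain ⟨A, hA, hiA⟩ : i ∈ ⋃₀ blocks T ω v := sUnion_blocks hT.connected ▸ Set.mem_univ i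
  exact ⟨A, ⟨hA, fun hAB => hi (hAB ▸ hiA)⟩, hiA⟩

lemma isNodeSplit_of_mem_blocks (hT : T.IsTree) (hB : B ∈ blocks T ω v) (hℬ : ℬ ⊆ blocks T ω v) :
    IsNodeSplit T ω B (⋃₀ ℬ) := by
  refine ⟨v, fun u hu => ?_⟩
  have hmem : ω ⁻¹' compAway T v u ∈ blocks T ω v := preimage_compAway_mem_blocks hu
  by_cases huB : ω ⁻¹' compAway T v u = B
  · exact Or.inl huB.subset
  by_cases huℬ : ω ⁻¹' compAway T v u ∈ ℬ
  · exact Or.inr (Or.inl (Set.subset_sUnion_of_mem huℬ))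
  · refine Or.inr (Or.inr (Set.subset_compl_iff_disjoint_right.2 ?_))
    refine Set.disjoint_union_right.2 ⟨pairwiseDisjoint_blocks hT hmem hB huB,
      Set.disjoint_sUnion_right.2 fun A hA => pairwiseDisjoint_blocks hT hmem (hℬ hA) ?_⟩
    exact fun h => huℬ (h ▸ hA)

lemma hierarchical_compl_of_mem_blocks [Finite I] (hT : T.IsTree) (hB : B ∈ blocks T ω v)
    (h : ∀ A ∈ blocks T ω v, A ≠ B → Hierarchical (IsNodeSplit T ω) A) :
    Hierarchical (IsNodeSplit T ω) Bᶜ := by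
  have hsub : blocks T ω v \ {B} ⊆ blocks T ω v := Set.sdiff_subset
  rw [← sUnion_blocks_sdiff_singleton hT hB]
  exact hierarchical_sUnion (Set.toFinite _) ((pairwiseDisjoint_blocks hT).subset hsub)
    (fun A hA => h A hA.1 hA.2) fun A hA ℬ hℬ =>
      isNodeSplit_of_mem_blocks hT hA.1 (hℬ.trans hsub)

lemma hierarchical_preimage_compAway [Finite I] [Finite V] (hT : T.IsTree) (hvu : T.Adj v u) :
    Hierarchical (IsNodeSplit T ω) (ω ⁻¹' compAway T v u) := by
  induction hS : compAway T v u using WellFoundedLT.induction generalizing v u with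
  | ind S ih =>
    subst hS
    rw [compAway_eq_compl hT hvu.symm, Set.preimage_compl]
    refine hierarchical_compl_of_mem_blocks hT (preimage_compAway_mem_blocks hvu.symm) ?_
    rintro _ (⟨u', hu', rfl⟩ | ⟨i, -, rfl⟩) hne
    · have hsub : compAway T u u' ⊆ compAway T v u :=
        compAway_subset_compAway hT.isAcyclic hvu.symm hu' fun h => hne (h ▸ rfl)
      have hu : u ∉ compAway T u u' := notMem_compAway hT.isAcyclic hu'
      exact ih _ (hsub.ssubset_of_mem_notMem (self_mem_compAway T v u) hu) hu' rfl
    · exact Hierarchical.singleton i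

lemma hierarchical_compl_singleton [Finite I] [Finite V] (hT : T.IsTree) (i : I) :
    Hierarchical (IsNodeSplit T ω) {i}ᶜ := by
  refine hierarchical_compl_of_mem_blocks hT (singleton_mem_blocks (T := T) (ω := ω)) ?_
  rintro _ (⟨u, hu, rfl⟩ | ⟨j, -, rfl⟩) -
  · exact hierarchical_preimage_compAway hT hu
  · exact Hierarchical.singleton j

/-- `(T', ω')` refines `(T, ω)`: for each node of `T'` of degree three, some node of `T` has each
of its branches contained in a branch at that node. -/
def IsRefinement {V' : Type} (T' : SimpleGraph V') (ω' : I → V') (T : SimpleGraph V) (ω : I → V) :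
    Prop :=
  ∀ v', deg T' v' = 3 → ∃ v, ∀ u, T.Adj v u →
    ∃ u', T'.Adj v' u' ∧ ω ⁻¹' compAway T v u ⊆ ω' ⁻¹' compAway T' v' u'

end Refinement

lemma BinaryHierarchy.isRefinement {I V : Type} [Finite I] {T : SimpleGraph V} {ω : I → V}
    {i₀ : I} {H : Set (Set I)} (h : BinaryHierarchy (IsNodeSplit T ω) {i₀}ᶜ H) :
    IsRefinement (SimpleGraph.hasse (WithTop H)) h.leaf T ω := by
  intro v' hv'
  rcases h.eq_leaf_or_eq_union v' with ⟨i, rfl⟩ | ⟨A, A₁, A₂, rfl, hd, ⟨v, hv⟩, hA⟩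
  · rw [h.deg_hasse_leaf] at hv'
    omega
  have hA₁ : A₁ ⋖ A := (h.covBy_iff_of_eq_union hd hA).2 (Or.inl rfl)
  have hA₂ : A₂ ⋖ A := (h.covBy_iff_of_eq_union hd hA).2 (Or.inr rfl)
  refine ⟨v, fun u hu => ?_⟩
  rcases hv u hu with hu₁ | hu₂ | hu₃
  · exact ⟨A₁, SimpleGraph.hasse_adj.2 (Or.inr (WithTop.coe_covBy_coe.2 hA₁)),
      hu₁.trans (h.leaf_preimage_compAway_of_covBy hA₁).ge⟩
  · exact ⟨A₂, SimpleGraph.hasse_adj.2 (Or.inr (WithTop.coe_covBy_coe.2 hA₂)),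
      hu₂.trans (h.leaf_preimage_compAway_of_covBy hA₂).ge⟩
  · obtain ⟨u', hu', hpre⟩ := h.exists_leaf_preimage_compAway_eq_compl A
    exact ⟨u', hu', (hpre.trans (congrArg _ hA)).symm ▸ hu₃⟩

theorem exists_cubic_refinement {I V : Type} [Finite I] [Nontrivial I] [Finite V]
    {T : SimpleGraph V} (hT : T.IsTree) (ω : I → V) :
    ∃ (V' : Type) (_ : Fintype V') (T' : SimpleGraph V') (ω' : I → V'), T'.IsTree ∧ IsCubic T' ∧
      Function.Injective ω' ∧ Set.range ω' = leaves T' ∧ IsRefinement T' ω' T ω := by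
  obtain ⟨i₀, i, hi⟩ := exists_pair_ne I
  obtain ⟨H, h⟩ := hierarchical_compl_singleton (ω := ω) hT i₀ ⟨i, hi.symm⟩
  exact ⟨WithTop H, Fintype.ofFinite _, SimpleGraph.hasse (WithTop H), h.leaf,
    h.isForestOrder.withTop.isTree_hasse, h.isCubic_hasse, h.leaf_injective, h.range_leaf,
    h.isRefinement⟩

/-! ### Trelliswidth is at most treewidth -/

section LowerBound

variable {F : Type} [Field F] {n : ℕ} {C : Submodule F (Fin n → F)} {V : Type}
  {T : SimpleGraph V} {ω : Fin n → V}

lemma shortDim_preimage_compAway_le_Ucap [Finite V] (hinj : Function.Injective ω)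
    (hleaf : Set.range ω ⊆ leaves T) (v u : V) :
    shortDim C (ω ⁻¹' compAway T v u) ≤ Ucap C (nAway T v u) :=
  shortDim_le_Ucap C <| Set.ncard_le_ncard_of_injOn ω
    (fun i hi => ⟨hi, hleaf (Set.mem_range_self i)⟩) hinj.injOn

variable [Fintype V]

lemma exists_kappaNode_eq_finrank (hT : T.IsTree) [Subsingleton (Fin n)] :
    ∃ v, kappaNode C T ω v = finrank F ↥C := by
  obtain ⟨v, hv⟩ : ∃ v, ∀ i, ω i = v := by
    rcases isEmpty_or_nonempty (Fin n) with _ | ⟨⟨i⟩⟩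
    · exact hT.connected.nonempty.elim fun v => ⟨v, isEmptyElim⟩
    · exact ⟨ω i, fun j => congrArg ω (Subsingleton.elim j i)⟩
  refine ⟨v, ?_⟩
  rw [kappaNode, Finset.sum_eq_zero, Nat.sub_zero]
  intro u hu
  have hempty : ω ⁻¹' compAway T v u = ∅ := Set.eq_empty_of_forall_notMem fun i hi =>
    notMem_compAway hT.isAcyclic (mem_nbrFinset.1 hu) (hv i ▸ hi)
  rw [hempty, shortDim_empty]

lemma sum_shortDim_preimage_compAway_le (hT : T.IsTree) {v : V} {κ : Type*} {t : Finset κ}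
    {A : κ → Set (Fin n)} (h : ∀ u, T.Adj v u → ∃ j ∈ t, ω ⁻¹' compAway T v u ⊆ A j) :
    ∑ u ∈ nbrFinset T v, shortDim C (ω ⁻¹' compAway T v u) ≤ ∑ j ∈ t, shortDim C (A j) := by
  refine sum_shortDim_le_sum_shortDim C ?_ fun u hu _ => h u (mem_nbrFinset.1 hu)
  intro u₁ h₁ u₂ h₂ hne
  exact (disjoint_compAway hT (mem_nbrFinset.1 h₁) (mem_nbrFinset.1 h₂) hne).preimage ω

theorem trellisWidth_le_constraintComplexity
    (hyp : ∀ (V : Type) [Fintype V] (T : SimpleGraph V), T.IsTree → IsCubic T →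
      (leaves T).ncard = n →
      ∃ v : V, deg T v = 3 ∧
        ∑ u ∈ nbrFinset T v, Ucap C (nAway T v u) ≤ finrank F ↥C - trellisWidth C)
    (hT : T.IsTree) (ω : Fin n → V) : trellisWidth C ≤ constraintComplexity C T ω := by
  have hτ : trellisWidth C ≤ finrank F ↥C := trellisWidth_le_finrank C
  suffices ∃ v, trellisWidth C ≤ kappaNode C T ω v by
    obtain ⟨v, hv⟩ := this
    exact hv.trans (Finset.le_sup (Finset.mem_univ v))
  rcases subsingleton_or_nontrivial (Fin n) with _ | _
  · obtain ⟨v, hv⟩ := exists_kappaNode_eq_finrank (C := C) (ω := ω) hT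
    exact ⟨v, hτ.trans hv.ge⟩
  · obtain ⟨V', _, T', ω', hT', hcubic, hinj, hrange, href⟩ := exists_cubic_refinement hT ω
    have hleaves : (leaves T').ncard = n := by
      rw [← hrange, ← Set.image_univ, Set.ncard_image_of_injective _ hinj, Set.ncard_univ,
        Nat.card_fin]
    obtain ⟨v', hv', hle⟩ := hyp V' T' hT' hcubic hleaves
    obtain ⟨v, hv⟩ := href v' hv'
    have hsum : ∑ u ∈ nbrFinset T v, shortDim C (ω ⁻¹' compAway T v u) ≤
        finrank F ↥C - trellisWidth C :=
      calc ∑ u ∈ nbrFinset T v, shortDim C (ω ⁻¹' compAway T v u)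
          ≤ ∑ u' ∈ nbrFinset T' v', shortDim C (ω' ⁻¹' compAway T' v' u') :=
            sum_shortDim_preimage_compAway_le hT fun u hu =>
              (hv u hu).imp fun u' h => h.imp_left mem_nbrFinset.2
        _ ≤ ∑ u' ∈ nbrFinset T' v', Ucap C (nAway T' v' u') :=
            Finset.sum_le_sum fun u' _ => shortDim_preimage_compAway_le_Ucap hinj hrange.le v' u'
        _ ≤ finrank F ↥C - trellisWidth C := hle
    refine ⟨v, ?_⟩
    rw [kappaNode]
    omega

end LowerBound

theorem stmt0_general {F : Type} [Field F] {n k : ℕ}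
    (C : Submodule F (Fin n → F)) (hk : finrank F ↥C = k)
    (hyp : ∀ (V : Type) [Fintype V] (T : SimpleGraph V), T.IsTree → IsCubic T →
      (leaves T).ncard = n →
      ∃ v : V, deg T v = 3 ∧
        ∑ u ∈ nbrFinset T v, Ucap C (nAway T v u) ≤ k - trellisWidth C) :
    treeWidth C = trellisWidth C := by
  subst hk
  exact le_antisymm (treeWidth_le_trellisWidth C)
    (le_treeWidth fun _ _ ω hT => trellisWidth_le_constraintComplexity hyp hT ω)

/-- Proposition 1: if for every cubic tree `T` with `n` leaves there is
an internal node `v` with `U_{n_1} + U_{n_2} + U_{n_3} ≤ k − τ(C)`, then the treewidth of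
`C` equals its trelliswidth. -/
theorem stmt0 {F : Type} [Field F] [Fintype F] {n k : ℕ}
    (C : Submodule F (Fin n → F)) (hk : finrank F ↥C = k)
    (hyp : ∀ (V : Type) [Fintype V] (T : SimpleGraph V), T.IsTree → IsCubic T →
      (leaves T).ncard = n →
      ∃ v : V, deg T v = 3 ∧
        ∑ u ∈ nbrFinset T v, Ucap C (nAway T v u) ≤ k - trellisWidth C) :
    treeWidth C = trellisWidth C :=
  stmt0_general C hk hyp
end

section
/- For integers 0 ≤ r ≤ m, the trelliswidth of the binary Reed–Muller code RM(r,m) is τ(r,m) = Σ_{j=0}^{r} C(m−2j−1, r−j) if m ≥ 2r+1, and τ(r,m) = 1 + Σ_{j=0}^{m−r−1} C(m−2j−1, r−j) if m < 2r+1 (here C(a,b) denotes the binomial coefficient, equal to 0 when b > a). -/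
open Module

/-- The binary Reed–Muller code `RM(r,m)`: the evaluation vectors, at the points of
`{0,1}^m` listed in the standard bit order, of the `m`-variable polynomials over `F₂`
of total degree at most `r`. -/
def RMcode (r m : ℕ) : Submodule (ZMod 2) (Fin (2 ^ m) → ZMod 2) :=
  Submodule.span (ZMod 2)
    {w | ∃ f : MvPolynomial (Fin m) (ZMod 2), f.totalDegree ≤ r ∧
      w = fun i => MvPolynomial.eval (fun j : Fin m => if Nat.testBit i.val j.val then 1 else 0) f}

/-- The claimed value `τ(r,m)` of the trelliswidth of `RM(r,m)`. -/
def tauRM (r m : ℕ) : ℕ :=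
  if 2 * r + 1 ≤ m then ∑ j ∈ Finset.range (r + 1), Nat.choose (m - (2 * j + 1)) (r - j)
  else 1 + ∑ j ∈ Finset.range (m - r), Nat.choose (m - (2 * j + 1)) (r - j)

/-!
Restricted to any `s` coordinates, `RM(r,m)` has dimension at least the number of integers below `s`
whose binary weight is at most `r`: split the coordinates by parity and induct on `m`. The first
`s` coordinates in the standard bit order attain the bound, because a squarefree monomial vanishes
at all indices smaller than the number whose binary digits are its variables; so do the last `s`,
by reversing all bits. Hence every past and every future has the largest possible shortening in the
standard bit order, which is therefore optimal at each time separately.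

The branch complexity at time `i` is now an expression in counts of integers of bounded weight. It
is symmetric under `i ↦ 2^m - 1 - i`, and for `2^k ≤ i < 2^(k+1)` the value for `(r + 1, k + 2)` at
`i` is that for `(r, k)` at `i - 2^k` plus `C(k + 1, r + 1)`, while for `i < 2^k` the value at `i`
is at most that for `(r, k)` at `i` plus the same binomial coefficient. The maximum thus satisfies
the recursion of the claimed sum.
-/

/-- Hamming weight of the binary expansion of `n`; for `n < 2 ^ m` it is the weight of the
point of `{0,1}^m` with index `n`. -/
def binaryWeight (n : ℕ) : ℕ := n.bitIndices.length

/-- The number of integers below `s` of binary weight less than `q`. For `q = r + 1` it is the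
rank of `RM(r,m)` restricted to its first `s` coordinates. -/
def lightCount (q s : ℕ) : ℕ := Nat.count (fun n => binaryWeight n < q) s

section BinaryWeight

theorem binaryWeight_zero : binaryWeight 0 = 0 := by simp [binaryWeight]

theorem binaryWeight_pos {n : ℕ} (hn : n ≠ 0) : 0 < binaryWeight n := by
  contrapose! hn
  have hnil : n.bitIndices = [] := List.length_eq_zero_iff.1 (Nat.le_zero.1 hn)
  simpa [hnil] using (Nat.sum_map_two_pow_bitIndices n).symm

theorem binaryWeight_two_mul (n : ℕ) : binaryWeight (2 * n) = binaryWeight n := by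
  simp [binaryWeight]

theorem binaryWeight_two_mul_add_one (n : ℕ) :
    binaryWeight (2 * n + 1) = binaryWeight n + 1 := by
  simp [binaryWeight]

theorem card_toFinset_bitIndices (n : ℕ) : n.bitIndices.toFinset.card = binaryWeight n :=
  List.toFinset_card_of_nodup Nat.bitIndices_nodup

theorem binaryWeight_sum_two_pow (s : Finset ℕ) : binaryWeight (∑ i ∈ s, 2 ^ i) = s.card := by
  rw [← card_toFinset_bitIndices, Finset.toFinset_bitIndices_sum_two_pow]

theorem lt_of_mem_bitIndices {n m j : ℕ} (hn : n < 2 ^ m) (hj : j ∈ n.bitIndices) : j < m :=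
  (Nat.pow_lt_pow_iff_right one_lt_two).1 ((Nat.two_pow_le_of_mem_bitIndices hj).trans_lt hn)

theorem binaryWeight_le {n m : ℕ} (hn : n < 2 ^ m) : binaryWeight n ≤ m := by
  rw [← card_toFinset_bitIndices, ← Finset.card_range m]
  exact Finset.card_le_card fun j hj =>
    Finset.mem_range.2 (lt_of_mem_bitIndices hn (List.mem_toFinset.1 hj))

theorem binaryWeight_two_pow_add {k n : ℕ} (hn : n < 2 ^ k) :
    binaryWeight (2 ^ k + n) = binaryWeight n + 1 := by
  have hk : k ∉ n.bitIndices.toFinset := fun h =>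
    (lt_of_mem_bitIndices hn (List.mem_toFinset.1 h)).false
  rw [← card_toFinset_bitIndices n, ← Finset.card_insert_of_notMem hk, ← binaryWeight_sum_two_pow,
    Finset.sum_insert hk, Finset.sum_toFinset_bitIndices_two_pow]

end BinaryWeight

section LightCount

theorem lightCount_zero_right (q : ℕ) : lightCount q 0 = 0 := Nat.count_zero _

theorem lightCount_zero_left (s : ℕ) : lightCount 0 s = 0 := by simp [lightCount]

theorem lightCount_succ (q s : ℕ) :
    lightCount q (s + 1) = lightCount q s + if binaryWeight s < q then 1 else 0 :=
  Nat.count_succ _ s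

theorem lightCount_mono_left {p q : ℕ} (h : p ≤ q) (s : ℕ) : lightCount p s ≤ lightCount q s :=
  Nat.count_mono_left fun _ _ hp => hp.trans_le h

/-- Subtraction-free form of: the number of `n < t` with `p ≤ binaryWeight n < q` is nondecreasing
in `t`. -/
theorem lightCount_add_lightCount_le {p q s t : ℕ} (hpq : p ≤ q) (hst : s ≤ t) :
    lightCount q s + lightCount p t ≤ lightCount p s + lightCount q t := by
  obtain ⟨d, rfl⟩ := Nat.exists_eq_add_of_le hst
  have hshift : Nat.count (fun n => binaryWeight (s + n) < p) d ≤
      Nat.count (fun n => binaryWeight (s + n) < q) d :=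
    Nat.count_mono_left fun _ _ hp => hp.trans_le hpq
  simp only [lightCount, Nat.count_add]
  omega

theorem lightCount_one_left (s : ℕ) : lightCount 1 s = min s 1 := by
  cases s with
  | zero => exact lightCount_zero_right 1
  | succ s =>
    have hpos : Nat.count (fun n => binaryWeight (n + 1) < 1) s = 0 :=
      Nat.count_iff_forall_not.2 fun n _ => not_lt.2 (binaryWeight_pos n.succ_ne_zero)
    rw [lightCount, Nat.count_succ', hpos, binaryWeight_zero, if_pos zero_lt_one]
    omega

theorem lightCount_le_self (q s : ℕ) : lightCount q s ≤ s := Nat.count_le _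

theorem lightCount_eq_self {q m s : ℕ} (hq : m < q) (hs : s ≤ 2 ^ m) : lightCount q s = s :=
  Nat.count_iff_forall.2 fun _ hn => (binaryWeight_le (hn.trans_le hs)).trans_lt hq

theorem lightCount_two_mul (q t : ℕ) :
    lightCount q (2 * t) = lightCount q t + lightCount (q - 1) t := by
  induction t with
  | zero => simp only [mul_zero, lightCount_zero_right]
  | succ t ih =>
    have hiff : binaryWeight t + 1 < q ↔ binaryWeight t < q - 1 := by omega
    rw [mul_add_one, ← add_assoc (2 * t) 1 1, lightCount_succ, lightCount_succ, lightCount_succ,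
      lightCount_succ, ih, binaryWeight_two_mul, binaryWeight_two_mul_add_one]
    simp only [hiff]
    ring

theorem lightCount_two_mul_add_one (q t : ℕ) :
    lightCount q (2 * t + 1) = lightCount q (t + 1) + lightCount (q - 1) t := by
  rw [lightCount_succ, lightCount_two_mul, lightCount_succ, binaryWeight_two_mul]
  ring

theorem lightCount_succ_two_pow_add (q : ℕ) {k s : ℕ} (hs : s ≤ 2 ^ k) :
    lightCount (q + 1) (2 ^ k + s) = lightCount (q + 1) (2 ^ k) + lightCount q s := by
  have hshift : Nat.count (fun n => binaryWeight (2 ^ k + n) < q + 1) s = lightCount q s := by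
    simp only [lightCount, Nat.count_eq_card_filter_range]
    congr 1
    refine Finset.filter_congr fun n hn => ?_
    rw [binaryWeight_two_pow_add ((Finset.mem_range.1 hn).trans_le hs), Nat.succ_lt_succ_iff]
  rw [lightCount, Nat.count_add, hshift]
  rfl

theorem lightCount_succ_two_pow_succ (q k : ℕ) :
    lightCount (q + 1) (2 ^ (k + 1)) = lightCount (q + 1) (2 ^ k) + lightCount q (2 ^ k) := by
  rw [pow_succ', lightCount_two_mul, Nat.add_sub_cancel]

theorem lightCount_succ_eq_add_choose (p m : ℕ) :
    lightCount (p + 1) (2 ^ m) = lightCount p (2 ^ m) + m.choose p := by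
  induction m generalizing p with
  | zero => cases p <;> simp [lightCount, Nat.count_one, binaryWeight_zero]
  | succ m ih =>
    rw [lightCount_succ_two_pow_succ, ih]
    cases p with
    | zero => simp only [lightCount_zero_left, Nat.choose_zero_right]
    | succ p =>
      rw [lightCount_succ_two_pow_succ, Nat.choose_succ_succ', ih p]
      omega

/-- The proof halves all numbers, which turns each parity combination of `a` and `b` into two
smaller instances of the inequality, at `q` and at `q - 1`. -/
theorem lightCount_add_le (q : ℕ) {a b : ℕ} (hba : b ≤ a) :
    lightCount q (a + b) ≤ lightCount q a + lightCount (q - 1) b := by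
  induction hN : a + b using Nat.strong_induction_on generalizing q a b with
  | _ N ih =>
  subst hN
  rcases Nat.eq_zero_or_pos b with rfl | hb
  · simp only [add_zero, Nat.le_add_right]
  rcases hba.eq_or_lt with rfl | hlt
  · rw [← two_mul, lightCount_two_mul]
  obtain ⟨c, rfl | rfl⟩ := Nat.even_or_odd' a <;> obtain ⟨d, rfl | rfl⟩ := Nat.even_or_odd' b
  · have hq := ih (c + d) (by omega) q (by omega) rfl
    have hq' := ih (c + d) (by omega) (q - 1) (by omega) rfl
    rw [← mul_add]
    simp only [lightCount_two_mul]
    omega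
  · have hq := ih (c + (d + 1)) (by omega) q (by omega) rfl
    have hq' := ih (c + d) (by omega) (q - 1) (by omega) rfl
    rw [← add_assoc, ← mul_add]
    simp only [lightCount_two_mul, lightCount_two_mul_add_one, add_assoc] at hq hq' ⊢
    omega
  · have hq := ih (c + 1 + d) (by omega) q (by omega) rfl
    have hq' := ih (c + d) (by omega) (q - 1) (by omega) rfl
    rw [add_right_comm, ← mul_add]
    simp only [lightCount_two_mul, lightCount_two_mul_add_one, add_right_comm c 1 d] at hq hq' ⊢
    omega
  · have hq := ih (c + 1 + d) (by omega) q (by omega) rfl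
    have hq' := ih (c + (d + 1)) (by omega) (q - 1) (by omega) rfl
    have hlayer := lightCount_add_lightCount_le (Nat.sub_le (q - 1) 1) (Nat.le_succ d)
    rw [show 2 * c + 1 + (2 * d + 1) = 2 * (c + 1 + d) by ring]
    rw [show c + (d + 1) = c + 1 + d by ring] at hq'
    simp only [lightCount_two_mul, lightCount_two_mul_add_one, Nat.succ_eq_add_one]
      at hq hq' hlayer ⊢
    omega

end LightCount

/-- The branch complexity of `RM(r,m)` at time `i` in the standard bit order, as a counting
expression. It is integer-valued so that the recursions in `m` are subtraction-free. -/
def bitOrderProfile (r m i : ℕ) : ℤ :=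
  lightCount (r + 1) (i + 1) + lightCount (r + 1) (2 ^ m - i) - lightCount (r + 1) (2 ^ m)

section BitOrderProfile

theorem bitOrderProfile_reflect (r : ℕ) {m i : ℕ} (hi : i < 2 ^ m) :
    bitOrderProfile r m (2 ^ m - 1 - i) = bitOrderProfile r m i := by
  rw [bitOrderProfile, bitOrderProfile, show 2 ^ m - 1 - i + 1 = 2 ^ m - i by omega,
    show 2 ^ m - (2 ^ m - 1 - i) = i + 1 by omega]
  ring

theorem bitOrderProfile_zero_left {m i : ℕ} (hi : i < 2 ^ m) : bitOrderProfile 0 m i = 1 := by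
  simp only [bitOrderProfile, zero_add, lightCount_one_left]
  omega

theorem bitOrderProfile_of_le {r m i : ℕ} (hmr : m ≤ r) (hi : i < 2 ^ m) :
    bitOrderProfile r m i = 1 := by
  have hcount {s : ℕ} (hs : s ≤ 2 ^ m) : lightCount (r + 1) s = s :=
    lightCount_eq_self (Nat.lt_succ_of_le hmr) hs
  rw [bitOrderProfile, hcount hi, hcount (Nat.sub_le _ _), hcount le_rfl]
  omega

theorem bitOrderProfile_succ_le (r : ℕ) {k i : ℕ} (hi : i < 2 ^ k) :
    bitOrderProfile (r + 1) (k + 2) i ≤ (k + 1).choose (r + 1) + bitOrderProfile r k i := by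
  have hsub : 2 ^ (k + 2) - i = 2 ^ (k + 1) + (2 ^ k + (2 ^ k - i)) := by
    rw [pow_succ _ (k + 1), pow_succ _ k]
    omega
  have hfuture : lightCount (r + 2) (2 ^ (k + 2) - i) = lightCount (r + 2) (2 ^ (k + 1)) +
      (lightCount (r + 1) (2 ^ k) + lightCount r (2 ^ k - i)) := by
    rw [hsub, lightCount_succ_two_pow_add _ (by rw [pow_succ]; omega),
      lightCount_succ_two_pow_add _ (Nat.sub_le _ _)]
  have htotal : lightCount (r + 2) (2 ^ (k + 2)) = lightCount (r + 2) (2 ^ (k + 1)) +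
      (lightCount (r + 1) (2 ^ k) + lightCount r (2 ^ k)) := by
    rw [lightCount_succ_two_pow_succ, lightCount_succ_two_pow_succ r]
  have hlayer : lightCount (r + 2) (i + 1) + lightCount (r + 1) (2 ^ k) ≤
      lightCount (r + 1) (i + 1) + lightCount (r + 2) (2 ^ k) :=
    lightCount_add_lightCount_le (Nat.le_succ (r + 1)) hi
  have hmono : lightCount r (2 ^ k - i) ≤ lightCount (r + 1) (2 ^ k - i) :=
    lightCount_mono_left r.le_succ _
  have hchoose := lightCount_succ_eq_add_choose r k
  have hchoose' : lightCount (r + 2) (2 ^ k) = lightCount (r + 1) (2 ^ k) + k.choose (r + 1) :=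
    lightCount_succ_eq_add_choose (r + 1) k
  rw [bitOrderProfile, bitOrderProfile, show r + 1 + 1 = r + 2 from rfl, hfuture, htotal,
    Nat.choose_succ_succ']
  push_cast
  omega

theorem bitOrderProfile_succ_two_pow_add (r : ℕ) {k i : ℕ} (hi : i < 2 ^ k) :
    bitOrderProfile (r + 1) (k + 2) (2 ^ k + i) =
      (k + 1).choose (r + 1) + bitOrderProfile r k i := by
  have hsub : 2 ^ (k + 2) - (2 ^ k + i) = 2 ^ (k + 1) + (2 ^ k - i) := by
    rw [pow_succ _ (k + 1), pow_succ _ k]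
    omega
  have hpast : lightCount (r + 2) (2 ^ k + i + 1) =
      lightCount (r + 2) (2 ^ k) + lightCount (r + 1) (i + 1) :=
    lightCount_succ_two_pow_add _ hi
  have hfuture : lightCount (r + 2) (2 ^ (k + 2) - (2 ^ k + i)) =
      lightCount (r + 2) (2 ^ (k + 1)) + lightCount (r + 1) (2 ^ k - i) := by
    rw [hsub, lightCount_succ_two_pow_add _ (by rw [pow_succ]; omega)]
  have htotal : lightCount (r + 2) (2 ^ (k + 2)) = lightCount (r + 2) (2 ^ (k + 1)) +
      (lightCount (r + 1) (2 ^ k) + lightCount r (2 ^ k)) := by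
    rw [lightCount_succ_two_pow_succ, lightCount_succ_two_pow_succ r]
  have hchoose := lightCount_succ_eq_add_choose r k
  have hchoose' : lightCount (r + 2) (2 ^ k) = lightCount (r + 1) (2 ^ k) + k.choose (r + 1) :=
    lightCount_succ_eq_add_choose (r + 1) k
  rw [bitOrderProfile, bitOrderProfile, show r + 1 + 1 = r + 2 from rfl, hpast, hfuture,
    htotal, Nat.choose_succ_succ']
  push_cast
  omega

end BitOrderProfile

section MaximumOfProfile

theorem tauRM_zero_left (m : ℕ) : tauRM 0 m = 1 := by
  rcases Nat.eq_zero_or_pos m with rfl | hm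
  · simp [tauRM]
  · simp [tauRM, Nat.one_le_iff_ne_zero.2 hm.ne']

theorem tauRM_of_le {r m : ℕ} (hmr : m ≤ r) : tauRM r m = 1 := by
  rw [tauRM, if_neg (by omega), Nat.sub_eq_zero_of_le hmr, Finset.sum_range_zero, add_zero]

theorem tauRM_succ_add_two {r k : ℕ} (hrk : r ≤ k) :
    tauRM (r + 1) (k + 2) = (k + 1).choose (r + 1) + tauRM r k := by
  have hsum (n : ℕ) :
      ∑ j ∈ Finset.range (n + 1), (k + 2 - (2 * j + 1)).choose (r + 1 - j) =
        (k + 1).choose (r + 1) + ∑ j ∈ Finset.range n, (k - (2 * j + 1)).choose (r - j) := by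
    rw [Finset.sum_range_succ', add_comm]
    congr 1
    refine Finset.sum_congr rfl fun j _ => ?_
    congr 1 <;> omega
  simp only [tauRM, show k + 2 - (r + 1) = k - r + 1 by omega, hsum]
  split_ifs <;> omega

theorem bitOrderProfile_le_tauRM {r m i : ℕ} (hi : i < 2 ^ m) :
    bitOrderProfile r m i ≤ tauRM r m := by
  induction r generalizing m i with
  | zero => rw [bitOrderProfile_zero_left hi, tauRM_zero_left, Nat.cast_one]
  | succ r ih =>
    rcases Nat.lt_or_ge (r + 1) m with hrm | hmr
    · obtain ⟨k, rfl⟩ : ∃ k, m = k + 2 := ⟨m - 2, by omega⟩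
      have hpow : 2 ^ (k + 2) = 4 * 2 ^ k := by ring
      rw [tauRM_succ_add_two (by omega), Nat.cast_add]
      wlog hhalf : i < 2 * 2 ^ k generalizing i
      · rw [← bitOrderProfile_reflect _ hi]
        exact this (by omega) (by omega)
      rcases Nat.lt_or_ge i (2 ^ k) with hik | hki
      · exact (bitOrderProfile_succ_le r hik).trans (add_le_add_right (ih hik) _)
      · obtain ⟨j, rfl⟩ := Nat.exists_eq_add_of_le hki
        have hj : j < 2 ^ k := by omega
        rw [bitOrderProfile_succ_two_pow_add r hj]
        exact add_le_add_right (ih hj) _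
    · rw [bitOrderProfile_of_le hmr hi, tauRM_of_le hmr, Nat.cast_one]

theorem exists_bitOrderProfile_eq_tauRM (r m : ℕ) :
    ∃ i < 2 ^ m, bitOrderProfile r m i = tauRM r m := by
  induction r generalizing m with
  | zero =>
    have h0 : 0 < 2 ^ m := by positivity
    exact ⟨0, h0, by rw [bitOrderProfile_zero_left h0, tauRM_zero_left, Nat.cast_one]⟩
  | succ r ih =>
    rcases Nat.lt_or_ge (r + 1) m with hrm | hmr
    · obtain ⟨k, rfl⟩ : ∃ k, m = k + 2 := ⟨m - 2, by omega⟩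
      obtain ⟨i, hi, hprofile⟩ := ih k
      refine ⟨2 ^ k + i, by rw [pow_add]; omega, ?_⟩
      rw [bitOrderProfile_succ_two_pow_add r hi, hprofile, tauRM_succ_add_two (by omega),
        Nat.cast_add]
    · have h0 : 0 < 2 ^ m := by positivity
      exact ⟨0, h0, by rw [bitOrderProfile_of_le hmr h0, tauRM_of_le hmr, Nat.cast_one]⟩

end MaximumOfProfile

section Polynomial

open MvPolynomial

theorem totalDegree_bind₁_le {σ τ R : Type*} [CommSemiring R] {f : σ → MvPolynomial τ R} {d : ℕ}
    (hf : ∀ i, (f i).totalDegree ≤ d) (p : MvPolynomial σ R) :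
    (bind₁ f p).totalDegree ≤ p.totalDegree * d := by
  conv_lhs => rw [p.as_sum, map_sum]
  refine totalDegree_finsetSum_le fun v hv => ?_
  calc (bind₁ f (monomial v (p.coeff v))).totalDegree
      ≤ (C (p.coeff v) : MvPolynomial τ R).totalDegree
          + (∏ i ∈ v.support, f i ^ v i).totalDegree := by
        rw [bind₁_monomial]
        exact totalDegree_mul _ _
    _ ≤ ∑ i ∈ v.support, v i * d := by
        rw [totalDegree_C, zero_add]
        exact (totalDegree_finsetProd _ _).trans (Finset.sum_le_sum fun i _ =>
          (totalDegree_pow _ _).trans (Nat.mul_le_mul_left _ (hf i)))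
    _ = (v.sum fun _ e => e) * d := (Finset.sum_mul ..).symm
    _ ≤ p.totalDegree * d := Nat.mul_le_mul_right _ (le_totalDegree hv)

theorem totalDegree_one_sub_X_le {σ R : Type*} [CommRing R] (i : σ) :
    (1 - X i : MvPolynomial σ R).totalDegree ≤ 1 :=
  (totalDegree_sub _ _).trans
    (max_le (totalDegree_one.trans_le zero_le_one) ((isHomogeneous_X R i).totalDegree_le))

end Polynomial

section LinearAlgebra

theorem finrank_map_add_finrank_inf_ker {K V W : Type*} [DivisionRing K] [AddCommGroup V]
    [Module K V] [AddCommGroup W] [Module K W] (U : Submodule K V) [FiniteDimensional K U]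
    (f : V →ₗ[K] W) : finrank K (U.map f) + finrank K ↥(U ⊓ LinearMap.ker f) = finrank K U := by
  have hker : (LinearMap.ker (f.domRestrict U)).map U.subtype = U ⊓ LinearMap.ker f := by
    rw [LinearMap.ker_domRestrict, Submodule.map_comap_subtype]
  rw [← LinearMap.range_domRestrict, ← hker, Submodule.finrank_map_subtype_eq,
    LinearMap.finrank_range_add_finrank_ker]

end LinearAlgebra

section ReedMullerOn

open MvPolynomial

variable (K : Type*) [Field K] {κ : Type*}

/-- The point of `{0,1}^m` with index `n` in the standard bit order, as a point of `K^m`. -/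
def bitPoint (m n : ℕ) : Fin m → K := fun j => if n.testBit j then 1 else 0

/-- Evaluation of polynomials in `m` variables at the points of `{0,1}^m` with indices `φ x`. -/
noncomputable def bitEval (m : ℕ) (φ : κ → ℕ) : MvPolynomial (Fin m) K →ₗ[K] κ → K :=
  LinearMap.pi fun x => (aeval (bitPoint K m (φ x))).toLinearMap

theorem bitEval_apply (m : ℕ) (φ : κ → ℕ) (p : MvPolynomial (Fin m) K) (x : κ) :
    bitEval K m φ p x = aeval (bitPoint K m (φ x)) p := rfl

/-- The Reed–Muller code of order `r` in `m` variables, punctured to the coordinates with indices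
`φ x`. Indexing by an arbitrary family of naturals makes the code functorial in the coordinate
set, which is what the induction on `m` needs. -/
noncomputable def reedMullerOn (r m : ℕ) (φ : κ → ℕ) : Submodule K (κ → K) :=
  (restrictTotalDegree (Fin m) K r).map (bitEval K m φ)

variable {K} {r m : ℕ} {φ : κ → ℕ}

theorem mem_reedMullerOn {f : κ → K} :
    f ∈ reedMullerOn K r m φ ↔ ∃ p : MvPolynomial (Fin m) K,
      p.totalDegree ≤ r ∧ ∀ x, aeval (bitPoint K m (φ x)) p = f x := by
  simp only [reedMullerOn, Submodule.mem_map, mem_restrictTotalDegree, funext_iff, bitEval_apply]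

theorem map_funLeft_reedMullerOn {ι : Type*} (e : ι → κ) :
    (reedMullerOn K r m φ).map (LinearMap.funLeft K K e) = reedMullerOn K r m (φ ∘ e) := by
  rw [reedMullerOn, ← Submodule.map_comp]
  rfl

theorem one_mem_reedMullerOn : (1 : κ → K) ∈ reedMullerOn K r m φ :=
  mem_reedMullerOn.2 ⟨1, by simp only [totalDegree_one, zero_le], fun _ => map_one _⟩

theorem bitPoint_succ_comp_succ (m n : ℕ) :
    bitPoint K (m + 1) n ∘ Fin.succ = bitPoint K m (n / 2) := by
  ext j
  simp only [bitPoint, Function.comp_apply, Fin.val_succ, Nat.testBit_succ]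

theorem reedMullerOn_half_le :
    reedMullerOn K r m (fun x => φ x / 2) ≤ reedMullerOn K r (m + 1) φ := by
  intro f hf
  obtain ⟨p, hp, hpf⟩ := mem_reedMullerOn.1 hf
  refine mem_reedMullerOn.2 ⟨rename Fin.succ p, (totalDegree_rename_le _ _).trans hp, fun x => ?_⟩
  rw [aeval_rename, bitPoint_succ_comp_succ, hpf]

theorem ite_mem_reedMullerOn {f : κ → K} (hf : f ∈ reedMullerOn K r m fun x => φ x / 2)
    (b : Bool) :
    (fun x => if (φ x).testBit 0 = b then f x else 0) ∈ reedMullerOn K (r + 1) (m + 1) φ := by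
  obtain ⟨p, hp, hpf⟩ := mem_reedMullerOn.1 (reedMullerOn_half_le hf)
  let ℓ : MvPolynomial (Fin (m + 1)) K := if b then X 0 else 1 - X 0
  have hℓ : ℓ.totalDegree ≤ 1 := by
    cases b
    · exact totalDegree_one_sub_X_le 0
    · exact (isHomogeneous_X K 0).totalDegree_le
  refine mem_reedMullerOn.2 ⟨p * ℓ, (totalDegree_mul _ _).trans (add_le_add hp hℓ), fun x => ?_⟩
  rw [map_mul, hpf]
  cases b <;> cases hx : (φ x).testBit 0 <;> simp [ℓ, bitPoint, hx]

theorem reedMullerOn_le_of_add_add_one_eq {ψ : κ → ℕ} (h : ∀ x, φ x + ψ x + 1 = 2 ^ m) :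
    reedMullerOn K r m φ ≤ reedMullerOn K r m ψ := by
  intro f hf
  obtain ⟨p, hp, hpf⟩ := mem_reedMullerOn.1 hf
  have hdeg := totalDegree_bind₁_le (fun i => totalDegree_one_sub_X_le (R := K) i) p
  refine mem_reedMullerOn.2 ⟨_, hdeg.trans ((mul_one _).trans_le hp), fun x => ?_⟩
  have hpoint : (fun j => aeval (bitPoint K m (ψ x)) (1 - X j : MvPolynomial (Fin m) K)) =
      bitPoint K m (φ x) := by
    ext j
    have hψ : ψ x = 2 ^ m - (φ x + 1) := by have := h x; omega
    have hφ : φ x < 2 ^ m := by have := h x; omega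
    cases hx : (φ x).testBit j <;>
      simp [bitPoint, hψ, Nat.testBit_two_pow_sub_succ hφ, hx]
  rw [aeval_bind₁, hpoint, hpf]

end ReedMullerOn

section RankLowerBound

variable {K : Type*} [Field K] {κ : Type*} [Finite κ] {r m : ℕ}

theorem card_fiber_add_card_fiber_not (f : κ → Bool) (b : Bool) :
    Nat.card {x // f x = b} + Nat.card {x // f x = !b} = Nat.card κ := by
  rw [← Nat.card_congr (Equiv.sigmaFiberEquiv f), Nat.card_sigma, Fintype.sum_bool]
  cases b
  · exact add_comm _ _
  · rfl

theorem min_card_one_le_finrank_reedMullerOn (φ : κ → ℕ) :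
    min (Nat.card κ) 1 ≤ finrank K (reedMullerOn K r m φ) := by
  rcases isEmpty_or_nonempty κ with hκ | hκ
  · simp only [Nat.card_of_isEmpty, zero_le, inf_of_le_left]
  · refine (min_le_right _ _).trans (Nat.one_le_iff_ne_zero.2 fun h => ?_)
    have hmem := one_mem_reedMullerOn (K := K) (r := r) (m := m) (φ := φ)
    rw [Submodule.finrank_eq_zero.1 h, Submodule.mem_bot] at hmem
    exact one_ne_zero hmem

/-- This is one half of the `(u | u + v)` construction: among the codewords vanishing on one parity
class are the products of a degree `r` polynomial with the indicator of the other class. -/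
theorem finrank_reedMullerOn_add_le (φ : κ → ℕ) (b : Bool) :
    finrank K (reedMullerOn K (r + 1) m fun x : {x // (φ x).testBit 0 = b} => φ x / 2) +
        finrank K (reedMullerOn K r m fun x : {x // (φ x).testBit 0 = !b} => φ x / 2) ≤
      finrank K (reedMullerOn K (r + 1) (m + 1) φ) := by
  let res (c : Bool) : (κ → K) →ₗ[K] {x // (φ x).testBit 0 = c} → K :=
    LinearMap.funLeft K K Subtype.val
  let U := reedMullerOn K (r + 1) (m + 1) φ
  have hres : reedMullerOn K (r + 1) m (fun x : {x // (φ x).testBit 0 = b} => φ x / 2) ≤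
      U.map (res b) :=
    (map_funLeft_reedMullerOn (φ := fun x => φ x / 2) Subtype.val).ge.trans
      (Submodule.map_mono reedMullerOn_half_le)
  have hker : reedMullerOn K r m (fun x : {x // (φ x).testBit 0 = !b} => φ x / 2) ≤
      (U ⊓ LinearMap.ker (res b)).map (res !b) := by
    refine (map_funLeft_reedMullerOn (φ := fun x => φ x / 2) Subtype.val).ge.trans ?_
    rintro _ ⟨f, hf, rfl⟩
    refine ⟨_, ⟨ite_mem_reedMullerOn hf !b, ?_⟩, ?_⟩
    · exact funext fun x => if_neg fun h => (Bool.eq_not_self b).1 (x.2.symm.trans h)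
    · exact funext fun x => if_pos x.2
  rw [← finrank_map_add_finrank_inf_ker U (res b)]
  exact add_le_add (Submodule.finrank_mono hres)
    ((Submodule.finrank_mono hker).trans (Submodule.finrank_map_le _ _))

theorem lightCount_le_finrank_reedMullerOn {φ : κ → ℕ} (hφ : Function.Injective φ)
    (hlt : ∀ x, φ x < 2 ^ m) :
    lightCount (r + 1) (Nat.card κ) ≤ finrank K (reedMullerOn K r m φ) := by
  induction m generalizing κ r with
  | zero =>
    have hcard : Nat.card κ ≤ 1 := (Nat.card_le_card_of_injective
      (fun x => (⟨φ x, hlt x⟩ : Fin (2 ^ 0))) fun x y h => hφ (Fin.mk.inj h)).trans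
        (Nat.card_eq_fintype_card.trans (Fintype.card_fin _)).le
    refine (lightCount_le_self _ _).trans ?_
    exact (le_min le_rfl hcard).trans (min_card_one_le_finrank_reedMullerOn φ)
  | succ m ih =>
    cases r with
    | zero =>
      rw [zero_add, lightCount_one_left]
      exact min_card_one_le_finrank_reedMullerOn φ
    | succ r =>
      let parity (x : κ) : Bool := (φ x).testBit 0
      have hclass (c : Bool) (k : ℕ) : lightCount (k + 1) (Nat.card {x // parity x = c}) ≤
          finrank K (reedMullerOn K k m fun x : {x // parity x = c} => φ x / 2) := by
        refine ih (fun x y hxy => Subtype.ext (hφ ?_)) fun x => by have := hlt x; omega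
        have hbit := x.2.trans y.2.symm
        simp only [parity, Nat.testBit_zero, decide_eq_decide] at hbit
        omega
      obtain ⟨b, hb⟩ :
          ∃ b, Nat.card {x // parity x = !b} ≤ Nat.card {x // parity x = b} := by
        rcases le_total (Nat.card {x // parity x = true}) (Nat.card {x // parity x = false}) with
          h | h
        exacts [⟨false, h⟩, ⟨true, h⟩]
      rw [← card_fiber_add_card_fiber_not parity b]
      exact (lightCount_add_le _ hb).trans ((add_le_add (hclass b (r + 1)) (hclass (!b) r)).trans
        (finrank_reedMullerOn_add_le φ b))

end RankLowerBound

section RankUpperBound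

open MvPolynomial

variable (K : Type*) [Field K] {κ : Type*} {r m s : ℕ}

/-- The function on indices induced by the squarefree monomial whose variables are the binary
digits of `T`. -/
def bitMonomial (T n : ℕ) : K := if ∀ j ∈ T.bitIndices, n.testBit j then 1 else 0

theorem bitMonomial_eq_zero {T n : ℕ} (h : n < T) : bitMonomial K T n = 0 :=
  if_neg fun hbits => h.not_ge (Nat.le_of_testBit fun j hj => hbits j (Nat.mem_bitIndices.2 hj))

theorem exists_bitEval_monomial_eq (φ : κ → ℕ) (d : Fin m →₀ ℕ) :
    ∃ T, binaryWeight T ≤ d.degree ∧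
      bitEval K m φ (monomial d 1) = fun x => bitMonomial K T (φ x) := by
  refine ⟨∑ j ∈ d.support.map Fin.valEmbedding, 2 ^ j, ?_, funext fun x => ?_⟩
  · rw [binaryWeight_sum_two_pow, Finset.card_map, Finset.card_eq_sum_ones]
    exact Finset.sum_le_sum fun j hj => Nat.one_le_iff_ne_zero.2 (Finsupp.mem_support_iff.1 hj)
  · have hfactor : ∀ j ∈ d.support,
        bitPoint K m (φ x) j ^ d j = if (φ x).testBit j then 1 else 0 := fun j hj => by
      rw [bitPoint, ite_pow, one_pow, zero_pow (Finsupp.mem_support_iff.1 hj)]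
    rw [bitEval_apply, aeval_monomial, map_one, one_mul, Finsupp.prod,
      Finset.prod_congr rfl hfactor, Finset.prod_ite_zero, Finset.prod_const_one, bitMonomial]
    simp only [← List.mem_toFinset, Finset.toFinset_bitIndices_sum_two_pow,
      Finset.forall_mem_map, Fin.valEmbedding_apply]
    congr

theorem reedMullerOn_le_span_bitMonomial {φ : κ → ℕ} (hφ : ∀ x, φ x < s) :
    reedMullerOn K r m φ ≤ Submodule.span K
      ((fun T x => bitMonomial K T (φ x)) ''
        ((Finset.range s).filter fun T => binaryWeight T < r + 1)) := by
  rw [reedMullerOn, restrictTotalDegree, restrictSupport_eq_span, Submodule.map_span,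
    Submodule.span_le, Set.image_image, Set.image_subset_iff]
  intro d hd
  obtain ⟨T, hT, heval⟩ := exists_bitEval_monomial_eq K φ d
  rw [Set.mem_preimage, heval]
  rcases lt_or_ge T s with hTs | hsT
  · refine Submodule.subset_span (Set.mem_image_of_mem _ ?_)
    exact Finset.mem_filter.2 ⟨Finset.mem_range.2 hTs, Nat.lt_succ_of_le (hT.trans hd)⟩
  · rw [funext fun x => bitMonomial_eq_zero K ((hφ x).trans_le hsT)]
    exact zero_mem _

theorem finrank_reedMullerOn_le_lightCount [Finite κ] {φ : κ → ℕ} (hφ : ∀ x, φ x < s) :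
    finrank K (reedMullerOn K r m φ) ≤ lightCount (r + 1) s := by
  classical
  have hle := Submodule.finrank_mono (reedMullerOn_le_span_bitMonomial K (r := r) (m := m) hφ)
  rw [← Finset.coe_image] at hle
  rw [lightCount, Nat.count_eq_card_filter_range]
  exact hle.trans ((finrank_span_finset_le_card _).trans Finset.card_image_le)

end RankUpperBound

section Shortening

variable {F : Type} [Field F] {n : ℕ}

theorem supportedOn_eq_ker (J : Set (Fin n)) :
    supportedOn F J = LinearMap.ker (LinearMap.funLeft F F (Subtype.val : ↥Jᶜ → Fin n)) := by
  ext f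
  simp [supportedOn, Submodule.mem_pi, funext_iff, LinearMap.funLeft_apply]

theorem finrank_map_funLeft_add_shortDim (C : Submodule F (Fin n → F)) (J : Set (Fin n)) :
    finrank F (C.map (LinearMap.funLeft F F (Subtype.val : ↥Jᶜ → Fin n))) + shortDim C J =
      finrank F C := by
  rw [shortDim, supportedOn_eq_ker, finrank_map_add_finrank_inf_ker]

/-- The dimension of the branch space at time `i` of the minimal trellis of `C` under the
coordinate ordering `π`. -/
noncomputable def branchDim (C : Submodule F (Fin n → F)) (π : Equiv.Perm (Fin n)) (i : Fin n) :
    ℕ :=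
  finrank F C - shortDim C (π '' {j | j < i}) - shortDim C (π '' {j | i < j})

theorem trellisWidth_eq_sup_branchDim {C : Submodule F (Fin n → F)} (π₀ : Equiv.Perm (Fin n))
    (hπ₀ : ∀ π i, branchDim C π₀ i ≤ branchDim C π i) :
    trellisWidth C = Finset.univ.sup (branchDim C π₀) := by
  refine le_antisymm (Nat.sInf_le ⟨π₀, rfl⟩) (le_csInf ⟨_, π₀, rfl⟩ ?_)
  rintro _ ⟨π, rfl⟩
  exact Finset.sup_mono_fun fun i _ => hπ₀ π i

end Shortening

section CubeCode

variable (K : Type) [Field K] (r m : ℕ)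

/-- The Reed–Muller code of order `r` on the full cube `{0,1}^m ⊆ K^m`; for `K = ZMod 2` it is
`RM(r,m)`. -/
noncomputable def cubeCode : Submodule K (Fin (2 ^ m) → K) :=
  reedMullerOn K r m fun i => (i : ℕ)

theorem RMcode_eq_cubeCode : RMcode r m = cubeCode (ZMod 2) r m := by
  rw [← Submodule.span_eq (cubeCode (ZMod 2) r m), RMcode]
  congr 1
  ext w
  refine (exists_congr fun p => and_congr_right fun _ => ?_).trans mem_reedMullerOn.symm
  exact funext_iff.trans (forall_congr' fun x => eq_comm)

theorem map_funLeft_cubeCode (S : Set (Fin (2 ^ m))) :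
    (cubeCode K r m).map (LinearMap.funLeft K K (Subtype.val : S → Fin (2 ^ m))) =
      reedMullerOn K r m fun x : S => (x : ℕ) :=
  map_funLeft_reedMullerOn (φ := fun i : Fin (2 ^ m) => (i : ℕ)) _

theorem finrank_cubeCode : finrank K (cubeCode K r m) = lightCount (r + 1) (2 ^ m) := by
  refine le_antisymm (finrank_reedMullerOn_le_lightCount K Fin.is_lt) ?_
  have hrank := lightCount_le_finrank_reedMullerOn (K := K) (r := r) Fin.val_injective
    (Fin.is_lt (n := 2 ^ m))
  rwa [Nat.card_fin] at hrank

variable {m}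

theorem shortDim_cubeCode_add_lightCount_le (J : Set (Fin (2 ^ m))) :
    shortDim (cubeCode K r m) J + lightCount (r + 1) (Nat.card ↥Jᶜ) ≤
      lightCount (r + 1) (2 ^ m) := by
  rw [← finrank_cubeCode K, ← finrank_map_funLeft_add_shortDim _ J, add_comm, map_funLeft_cubeCode]
  exact add_le_add_left (lightCount_le_finrank_reedMullerOn
    (Fin.val_injective.comp Subtype.val_injective) fun x => x.1.is_lt) _

theorem le_shortDim_cubeCode_Ioi (i : Fin (2 ^ m)) :
    lightCount (r + 1) (2 ^ m) ≤
      shortDim (cubeCode K r m) {j | i < j} + lightCount (r + 1) (i + 1) := by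
  rw [← finrank_cubeCode K, ← finrank_map_funLeft_add_shortDim _ {j | i < j}, add_comm,
    map_funLeft_cubeCode]
  exact add_le_add_right (finrank_reedMullerOn_le_lightCount K fun x =>
    Nat.lt_succ_of_le (not_lt.1 x.2)) _

theorem le_shortDim_cubeCode_Iio (i : Fin (2 ^ m)) :
    lightCount (r + 1) (2 ^ m) ≤
      shortDim (cubeCode K r m) {j | j < i} + lightCount (r + 1) (2 ^ m - i) := by
  rw [← finrank_cubeCode K, ← finrank_map_funLeft_add_shortDim _ {j | j < i}, add_comm,
    map_funLeft_cubeCode]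
  have hreflect := reedMullerOn_le_of_add_add_one_eq (K := K) (r := r)
    (φ := fun x : ↥{j | j < i}ᶜ => (x : ℕ)) (ψ := fun x => 2 ^ m - (x + 1)) (m := m)
    fun x => by have := x.1.is_lt; omega
  refine add_le_add_right ((Submodule.finrank_mono hreflect).trans
    (finrank_reedMullerOn_le_lightCount K fun x => ?_)) _
  have hx : i ≤ (x : Fin (2 ^ m)) := not_lt.1 x.2
  have := x.1.is_lt
  omega

theorem card_compl_image_Iio {n : ℕ} (π : Equiv.Perm (Fin n)) (i : Fin n) :
    Nat.card ↥(π '' {j | j < i})ᶜ = n - i := by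
  change Nat.card ↥(π '' Set.Iio i)ᶜ = n - i
  rw [← Set.image_compl_eq π.bijective, Nat.card_image_of_injective π.injective, Set.compl_Iio,
    Nat.card_coe_set_eq, ← Finset.coe_Ici, Set.ncard_coe_finset, Fin.card_Ici]

theorem card_compl_image_Ioi {n : ℕ} (π : Equiv.Perm (Fin n)) (i : Fin n) :
    Nat.card ↥(π '' {j | i < j})ᶜ = i + 1 := by
  change Nat.card ↥(π '' Set.Ioi i)ᶜ = i + 1
  rw [← Set.image_compl_eq π.bijective, Nat.card_image_of_injective π.injective, Set.compl_Ioi,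
    Nat.card_coe_set_eq, ← Finset.coe_Iic, Set.ncard_coe_finset, Fin.card_Iic]

theorem toNat_bitOrderProfile_le_branchDim (π : Equiv.Perm (Fin (2 ^ m))) (i : Fin (2 ^ m)) :
    (bitOrderProfile r m i).toNat ≤ branchDim (cubeCode K r m) π i := by
  have hpast := shortDim_cubeCode_add_lightCount_le K r (π '' {j | j < i})
  have hfuture := shortDim_cubeCode_add_lightCount_le K r (π '' {j | i < j})
  rw [card_compl_image_Iio] at hpast
  rw [card_compl_image_Ioi] at hfuture
  rw [branchDim, finrank_cubeCode, bitOrderProfile]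
  omega

theorem branchDim_one_cubeCode (i : Fin (2 ^ m)) :
    branchDim (cubeCode K r m) 1 i = (bitOrderProfile r m i).toNat := by
  refine le_antisymm ?_ (toNat_bitOrderProfile_le_branchDim K r 1 i)
  have hpast := le_shortDim_cubeCode_Iio K r i
  have hfuture := le_shortDim_cubeCode_Ioi K r i
  simp only [branchDim, finrank_cubeCode, bitOrderProfile, Equiv.Perm.coe_one, Set.image_id]
  omega

end CubeCode

theorem stmt6_general (K : Type) [Field K] (r m : ℕ) :
    trellisWidth (cubeCode K r m) = tauRM r m := by
  have hoptimal (π i) : branchDim (cubeCode K r m) 1 i ≤ branchDim (cubeCode K r m) π i :=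
    (branchDim_one_cubeCode K r i).trans_le (toNat_bitOrderProfile_le_branchDim K r π i)
  rw [trellisWidth_eq_sup_branchDim 1 hoptimal]
  refine le_antisymm (Finset.sup_le fun i _ => ?_) ?_
  · rw [branchDim_one_cubeCode, Int.toNat_le]
    exact bitOrderProfile_le_tauRM i.is_lt
  · obtain ⟨i, hi, hprofile⟩ := exists_bitOrderProfile_eq_tauRM r m
    calc tauRM r m = branchDim (cubeCode K r m) 1 ⟨i, hi⟩ := by
          rw [branchDim_one_cubeCode, hprofile, Int.toNat_natCast]
      _ ≤ _ := Finset.le_sup (Finset.mem_univ _)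

/-- the trelliswidth of the binary Reed–Muller code `RM(r,m)`. -/
theorem stmt6 (r m : ℕ) (hrm : r ≤ m) :
    trellisWidth (RMcode r m) = tauRM r m := by
  rw [RMcode_eq_cubeCode, stmt6_general]
end
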